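/- Let K be a commutative semiring with 0 ≠ 1 that is locally finite, and Δ a finite alphabet. A nested word series S : NW(Δ) → K is regular if and only if S is MSO(K)-definable. -/

import Mathlib

/-! ### Nested words and weighted nested word automata -/

/-- A nesting relation of width `n` (positions `1,…,n`). -/
def IsNestingRel (n : ℕ) (ν : ℕ → ℕ → Prop) : Prop :=
  (∀ i j, ν i j → 1 ≤ i ∧ i < j ∧ j ≤ n) ∧
  (∀ i j j', ν i j → ν i j' → j = j') ∧
  (∀ i i' j, ν i j → ν i' j → i = i') ∧
  (∀ i j i' j', ν i j → ν i' j' → i < i' → j < i' ∨ j' < j)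

/-- A nested word over `Δ`: a nonempty word together with a nesting relation. -/
structure NestedWord (Δ : Type) : Type where
  word : List Δ
  ne : word ≠ []
  rel : ℕ → ℕ → Prop
  isNest : IsNestingRel word.length rel

namespace NestedWord

variable {Δ : Type} (nw : NestedWord Δ)

/-- The length of the nested word. -/
def len : ℕ := nw.word.length

/-- The letter at (1-based) position `j`. -/
def letter (j : ℕ) : Δ := nw.word.getD (j - 1) (nw.word.head nw.ne)

def IsCall (j : ℕ) : Prop := ∃ i, nw.rel j i
def IsReturn (j : ℕ) : Prop := ∃ i, nw.rel i j
def IsInternal (j : ℕ) : Prop :=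
  1 ≤ j ∧ j ≤ nw.len ∧ ¬ nw.IsCall j ∧ ¬ nw.IsReturn j

/-- The nesting depth of position `k`: the number of arches open at `k`. -/
noncomputable def depth (k : ℕ) : ℕ :=
  Set.ncard {p : ℕ × ℕ | nw.rel p.1 p.2 ∧ p.1 ≤ k ∧ k ≤ p.2}

end NestedWord

/-- Clamp a function on `Fin (n+1)` to a function on `ℕ`. -/
def clampFun {Q : Type} {n : ℕ} (r : Fin (n + 1) → Q) : ℕ → Q :=
  fun k => r ⟨min k n, Nat.lt_succ_of_le (min_le_right _ _)⟩

/-- A weighted nested word automaton over the commutative semiring `K`. -/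
structure WNWA (K Δ : Type) [CommSemiring K] : Type 1 where
  Q : Type
  [fintQ : Fintype Q]
  ι : Q → K
  δcall : Q → Δ → Q → K
  δint : Q → Δ → Q → K
  δret : Q → Q → Δ → Q → K
  κ : Q → K

attribute [instance] WNWA.fintQ

namespace WNWA

variable {K Δ : Type} [CommSemiring K]

open Classical in
/-- The weight contributed by position `j` in a run `ρ`. -/
noncomputable def posWeight (A : WNWA K Δ) (nw : NestedWord Δ) (ρ : ℕ → A.Q) (j : ℕ) : K :=
  if nw.IsCall j then A.δcall (ρ (j - 1)) (nw.letter j) (ρ j)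
  else if h : nw.IsReturn j then
    A.δret (ρ (j - 1)) (ρ (h.choose - 1)) (nw.letter j) (ρ j)
  else A.δint (ρ (j - 1)) (nw.letter j) (ρ j)

/-- The weight of a run. -/
noncomputable def runWeight (A : WNWA K Δ) (nw : NestedWord Δ) (ρ : ℕ → A.Q) : K :=
  ∏ j ∈ Finset.Icc 1 nw.len, A.posWeight nw ρ j

/-- The behavior of a weighted nested word automaton. -/
noncomputable def behavior (A : WNWA K Δ) (nw : NestedWord Δ) : K :=
  ∑ r : Fin (nw.len + 1) → A.Q,
    A.ι (r 0) * A.runWeight nw (clampFun r) * A.κ (r (Fin.last _))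

end WNWA

/-- A nested word series is regular if it is the behavior of some WNWA. -/
def NWRegular {K Δ : Type} [CommSemiring K] (S : NestedWord Δ → K) : Prop :=
  ∃ A : WNWA K Δ, ∀ nw, A.behavior nw = S nw
/-! ### Weighted MSO logic over nested words -/

/-- Weighted MSO formulae over nested words: constants from `K`, atomic formulae
and their negations, closed under `∨`, `∧`, and the four quantifiers. -/
inductive WMSO (K Δ : Type) : Type where
  | const : K → WMSO K Δ
  | eqv : ℕ → ℕ → WMSO K Δ
  | lab : Δ → ℕ → WMSO K Δ
  | lev : ℕ → ℕ → WMSO K Δ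
  | nuv : ℕ → ℕ → WMSO K Δ
  | mem : ℕ → ℕ → WMSO K Δ
  | neq : ℕ → ℕ → WMSO K Δ
  | nlab : Δ → ℕ → WMSO K Δ
  | nle : ℕ → ℕ → WMSO K Δ
  | nnu : ℕ → ℕ → WMSO K Δ
  | nmem : ℕ → ℕ → WMSO K Δ
  | or : WMSO K Δ → WMSO K Δ → WMSO K Δ
  | and : WMSO K Δ → WMSO K Δ → WMSO K Δ
  | exF : ℕ → WMSO K Δ → WMSO K Δ
  | exS : ℕ → WMSO K Δ → WMSO K Δ
  | alF : ℕ → WMSO K Δ → WMSO K Δ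
  | alS : ℕ → WMSO K Δ → WMSO K Δ

namespace WMSO

variable {K Δ : Type} [CommSemiring K]

open Classical in
/-- Weighted semantics: `∨ ↦ +`, `∧ ↦ ·`, `∃ ↦ Σ`, `∀ ↦ Π`. -/
noncomputable def sem (nw : NestedWord Δ) :
    WMSO K Δ → (ℕ → ℕ) → (ℕ → Finset ℕ) → K
  | .const k, _, _ => k
  | .eqv x y, γ1, _ => if γ1 x = γ1 y then 1 else 0
  | .lab a x, γ1, _ => if nw.letter (γ1 x) = a then 1 else 0
  | .lev x y, γ1, _ => if γ1 x ≤ γ1 y then 1 else 0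
  | .nuv x y, γ1, _ => if nw.rel (γ1 x) (γ1 y) then 1 else 0
  | .mem x X, γ1, γ2 => if γ1 x ∈ γ2 X then 1 else 0
  | .neq x y, γ1, _ => if γ1 x = γ1 y then 0 else 1
  | .nlab a x, γ1, _ => if nw.letter (γ1 x) = a then 0 else 1
  | .nle x y, γ1, _ => if γ1 x ≤ γ1 y then 0 else 1
  | .nnu x y, γ1, _ => if nw.rel (γ1 x) (γ1 y) then 0 else 1
  | .nmem x X, γ1, γ2 => if γ1 x ∈ γ2 X then 0 else 1
  | .or φ ψ, γ1, γ2 => sem nw φ γ1 γ2 + sem nw ψ γ1 γ2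
  | .and φ ψ, γ1, γ2 => sem nw φ γ1 γ2 * sem nw ψ γ1 γ2
  | .exF x φ, γ1, γ2 =>
      ∑ i ∈ Finset.Icc 1 nw.len, sem nw φ (Function.update γ1 x i) γ2
  | .exS X φ, γ1, γ2 =>
      ∑ T ∈ (Finset.Icc 1 nw.len).powerset, sem nw φ γ1 (Function.update γ2 X T)
  | .alF x φ, γ1, γ2 =>
      ∏ i ∈ Finset.Icc 1 nw.len, sem nw φ (Function.update γ1 x i) γ2
  | .alS X φ, γ1, γ2 =>
      ∏ T ∈ (Finset.Icc 1 nw.len).powerset, sem nw φ γ1 (Function.update γ2 X T)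

/-- Free first-order variables. -/
def freeF : WMSO K Δ → Finset ℕ
  | .const _ => ∅
  | .eqv x y => {x, y}
  | .lab _ x => {x}
  | .lev x y => {x, y}
  | .nuv x y => {x, y}
  | .mem x _ => {x}
  | .neq x y => {x, y}
  | .nlab _ x => {x}
  | .nle x y => {x, y}
  | .nnu x y => {x, y}
  | .nmem x _ => {x}
  | .or φ ψ => φ.freeF ∪ ψ.freeF
  | .and φ ψ => φ.freeF ∪ ψ.freeF
  | .exF x φ => φ.freeF.erase x
  | .exS _ φ => φ.freeF
  | .alF x φ => φ.freeF.erase x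
  | .alS _ φ => φ.freeF

/-- Free second-order variables. -/
def freeS : WMSO K Δ → Finset ℕ
  | .mem _ X => {X}
  | .nmem _ X => {X}
  | .or φ ψ => φ.freeS ∪ ψ.freeS
  | .and φ ψ => φ.freeS ∪ ψ.freeS
  | .exF _ φ => φ.freeS
  | .alF _ φ => φ.freeS
  | .exS X φ => φ.freeS.erase X
  | .alS X φ => φ.freeS.erase X
  | _ => ∅

/-- Sentences: no free variables. -/
def Sentence (φ : WMSO K Δ) : Prop := φ.freeF = ∅ ∧ φ.freeS = ∅

end WMSO

/-! ### Classical MSO over nested words and syntactically unambiguous formulae -/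

/-- Classical MSO formulae over nested words. -/
inductive MSOF (Δ : Type) : Type where
  | eqv : ℕ → ℕ → MSOF Δ
  | lab : Δ → ℕ → MSOF Δ
  | lev : ℕ → ℕ → MSOF Δ
  | nuv : ℕ → ℕ → MSOF Δ
  | mem : ℕ → ℕ → MSOF Δ
  | not : MSOF Δ → MSOF Δ
  | or : MSOF Δ → MSOF Δ → MSOF Δ
  | and : MSOF Δ → MSOF Δ → MSOF Δ
  | exF : ℕ → MSOF Δ → MSOF Δ
  | exS : ℕ → MSOF Δ → MSOF Δ
  | alF : ℕ → MSOF Δ → MSOF Δ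
  | alS : ℕ → MSOF Δ → MSOF Δ

namespace MSOF

variable {Δ : Type}

/-- Substitution of first-order variable `x` by `y` (capture cannot occur for fresh `y`). -/
def substF (x y : ℕ) : MSOF Δ → MSOF Δ
  | eqv u v => eqv (if u = x then y else u) (if v = x then y else v)
  | lab a u => lab a (if u = x then y else u)
  | lev u v => lev (if u = x then y else u) (if v = x then y else v)
  | nuv u v => nuv (if u = x then y else u) (if v = x then y else v)
  | mem u X => mem (if u = x then y else u) X
  | not φ => not (substF x y φ)
  | or φ ψ => or (substF x y φ) (substF x y ψ)
  | and φ ψ => and (substF x y φ) (substF x y ψ)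
  | exF z φ => if z = x then exF z φ else exF z (substF x y φ)
  | exS Z φ => exS Z (substF x y φ)
  | alF z φ => if z = x then alF z φ else alF z (substF x y φ)
  | alS Z φ => alS Z (substF x y φ)

/-- Substitution of second-order variable `X` by `Y`. -/
def substS (X Y : ℕ) : MSOF Δ → MSOF Δ
  | mem u Z => mem u (if Z = X then Y else Z)
  | not φ => not (substS X Y φ)
  | or φ ψ => or (substS X Y φ) (substS X Y ψ)
  | and φ ψ => and (substS X Y φ) (substS X Y ψ)
  | exF z φ => exF z (substS X Y φ)
  | exS Z φ => if Z = X then exS Z φ else exS Z (substS X Y φ)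
  | alF z φ => alF z (substS X Y φ)
  | alS Z φ => if Z = X then alS Z φ else alS Z (substS X Y φ)
  | φ => φ

/-- Largest first-order variable occurring (free or bound). -/
def maxF : MSOF Δ → ℕ
  | eqv u v => max u v
  | lab _ u => u
  | lev u v => max u v
  | nuv u v => max u v
  | mem u _ => u
  | not φ => φ.maxF
  | or φ ψ => max φ.maxF ψ.maxF
  | and φ ψ => max φ.maxF ψ.maxF
  | exF z φ => max z φ.maxF
  | exS _ φ => φ.maxF
  | alF z φ => max z φ.maxF
  | alS _ φ => φ.maxF

/-- Largest second-order variable occurring (free or bound). -/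
def maxS : MSOF Δ → ℕ
  | mem _ X => X
  | not φ => φ.maxS
  | or φ ψ => max φ.maxS ψ.maxS
  | and φ ψ => max φ.maxS ψ.maxS
  | exF _ φ => φ.maxS
  | exS Z φ => max Z φ.maxS
  | alF _ φ => φ.maxS
  | alS Z φ => max Z φ.maxS
  | _ => 0

end MSOF

/-- The lexicographic (strict) order `Y < X` on sets, used to disambiguate set
quantification: `∃y. y ∈ X ∧ ¬ y ∈ Y ∧ ∀z. (z < y → (z ∈ Y ↔ z ∈ X))`,
where `y` and `z` are the first-order variables `0` and `1`. -/
def lessSet {Δ : Type} (Y X : ℕ) : MSOF Δ :=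
  .exF 0 (.and (.mem 0 X) (.and (.not (.mem 0 Y))
    (.alF 1 (.or (.lev 0 1)
      (.and (.or (.not (.mem 1 Y)) (.mem 1 X)) (.or (.not (.mem 1 X)) (.mem 1 Y)))))))

mutual
  /-- `PlusOf K ψ φ` : `φ = ψ⁺`, the positive syntactically unambiguous weighted
  version of the classical formula `ψ`. -/
  inductive PlusOf (K : Type) {Δ : Type} : MSOF Δ → WMSO K Δ → Prop where
    | eqv : ∀ x y, PlusOf K (.eqv x y) (.eqv x y)
    | lab : ∀ (a : Δ) x, PlusOf K (.lab a x) (.lab a x)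
    | lev : ∀ x y, PlusOf K (.lev x y) (.lev x y)
    | nuv : ∀ x y, PlusOf K (.nuv x y) (.nuv x y)
    | mem : ∀ x X, PlusOf K (.mem x X) (.mem x X)
    | not : ∀ {ψ : MSOF Δ} {χ}, MinusOf K ψ χ → PlusOf K (.not ψ) χ
    | or : ∀ {ψ₁ ψ₂ : MSOF Δ} {a b c}, PlusOf K ψ₁ a → MinusOf K ψ₁ b → PlusOf K ψ₂ c →
        PlusOf K (.or ψ₁ ψ₂) (.or a (.and b c))
    | and : ∀ {ψ₁ ψ₂ : MSOF Δ} {a b}, PlusOf K ψ₁ a → PlusOf K ψ₂ b →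
        PlusOf K (.and ψ₁ ψ₂) (.and a b)
    | exF : ∀ {x : ℕ} {ψ : MSOF Δ} {a χ} (y : ℕ), y = (MSOF.exF x ψ).maxF + 1 →
        PlusOf K ψ a →
        MinusOf K (.and (.not (.lev x y)) (ψ.substF x y)) χ →
        PlusOf K (.exF x ψ) (.exF x (.and a (.alF y χ)))
    | alF : ∀ {x : ℕ} {ψ : MSOF Δ} {a}, PlusOf K ψ a → PlusOf K (.alF x ψ) (.alF x a)
    | exS : ∀ {X : ℕ} {ψ : MSOF Δ} {a χ} (Y : ℕ), Y = (MSOF.exS X ψ).maxS + 1 →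
        PlusOf K ψ a →
        MinusOf K (.and (lessSet Y X) (ψ.substS X Y)) χ →
        PlusOf K (.exS X ψ) (.exS X (.and a (.alS Y χ)))
    | alS : ∀ {X : ℕ} {ψ : MSOF Δ} {a}, PlusOf K ψ a → PlusOf K (.alS X ψ) (.alS X a)

  /-- `MinusOf K ψ φ` : `φ = ψ⁻`. -/
  inductive MinusOf (K : Type) {Δ : Type} : MSOF Δ → WMSO K Δ → Prop where
    | eqv : ∀ x y, MinusOf K (.eqv x y) (.neq x y)
    | lab : ∀ (a : Δ) x, MinusOf K (.lab a x) (.nlab a x)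
    | lev : ∀ x y, MinusOf K (.lev x y) (.nle x y)
    | nuv : ∀ x y, MinusOf K (.nuv x y) (.nnu x y)
    | mem : ∀ x X, MinusOf K (.mem x X) (.nmem x X)
    | not : ∀ {ψ : MSOF Δ} {χ}, PlusOf K ψ χ → MinusOf K (.not ψ) χ
    | or : ∀ {ψ₁ ψ₂ : MSOF Δ} {a b}, MinusOf K ψ₁ a → MinusOf K ψ₂ b →
        MinusOf K (.or ψ₁ ψ₂) (.and a b)
    | and : ∀ {ψ₁ ψ₂ : MSOF Δ} {a b c}, MinusOf K ψ₁ a → PlusOf K ψ₁ b → MinusOf K ψ₂ c →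
        MinusOf K (.and ψ₁ ψ₂) (.or a (.and b c))
    | exF : ∀ {x : ℕ} {ψ : MSOF Δ} {a}, MinusOf K ψ a → MinusOf K (.exF x ψ) (.alF x a)
    | alF : ∀ {x : ℕ} {ψ : MSOF Δ} {a χ} (y : ℕ), y = (MSOF.alF x ψ).maxF + 1 →
        MinusOf K ψ a →
        MinusOf K (.and (.not (.lev x y)) (.not (ψ.substF x y))) χ →
        MinusOf K (.alF x ψ) (.exF x (.and a (.alF y χ)))
    | exS : ∀ {X : ℕ} {ψ : MSOF Δ} {a}, MinusOf K ψ a → MinusOf K (.exS X ψ) (.alS X a)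
    | alS : ∀ {X : ℕ} {ψ : MSOF Δ} {a χ} (Y : ℕ), Y = (MSOF.alS X ψ).maxS + 1 →
        MinusOf K ψ a →
        MinusOf K (.and (lessSet Y X) (.not (ψ.substS X Y))) χ →
        MinusOf K (.alS X ψ) (.exS X (.and a (.alS Y χ)))
end

/-- A weighted formula is syntactically unambiguous if it is of the form `ψ⁺` or
`ψ⁻` for a classical formula `ψ`. -/
def SyntUnamb {K Δ : Type} (φ : WMSO K Δ) : Prop :=
  ∃ ψ : MSOF Δ, PlusOf K ψ φ ∨ MinusOf K ψ φ

/-- Almost unambiguous formulae: the smallest class containing all constants and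
all syntactically unambiguous formulae which is closed under `∧` and `∨`. -/
inductive AUMSO {K Δ : Type} : WMSO K Δ → Prop where
  | const (k : K) : AUMSO (.const k)
  | unamb {φ : WMSO K Δ} : SyntUnamb φ → AUMSO φ
  | and {φ ψ : WMSO K Δ} : AUMSO φ → AUMSO ψ → AUMSO (.and φ ψ)
  | or {φ ψ : WMSO K Δ} : AUMSO φ → AUMSO ψ → AUMSO (.or φ ψ)

/-- Weakly unambiguous formulae: additionally closed under existential quantification. -/
inductive WUMSO {K Δ : Type} : WMSO K Δ → Prop where
  | const (k : K) : WUMSO (.const k)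
  | unamb {φ : WMSO K Δ} : SyntUnamb φ → WUMSO φ
  | and {φ ψ : WMSO K Δ} : WUMSO φ → WUMSO ψ → WUMSO (.and φ ψ)
  | or {φ ψ : WMSO K Δ} : WUMSO φ → WUMSO ψ → WUMSO (.or φ ψ)
  | exF {x : ℕ} {φ : WMSO K Δ} : WUMSO φ → WUMSO (.exF x φ)
  | exS {X : ℕ} {φ : WMSO K Δ} : WUMSO φ → WUMSO (.exS X φ)

/-- Syntactically restricted MSO: every subformula `∀X.ψ` has `ψ` syntactically
unambiguous and every subformula `∀x.ψ` has `ψ` almost unambiguous. -/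
def SRMSO {K Δ : Type} : WMSO K Δ → Prop
  | .or φ ψ => SRMSO φ ∧ SRMSO ψ
  | .and φ ψ => SRMSO φ ∧ SRMSO ψ
  | .exF _ φ => SRMSO φ
  | .exS _ φ => SRMSO φ
  | .alF _ φ => AUMSO φ ∧ SRMSO φ
  | .alS _ φ => SyntUnamb φ ∧ SRMSO φ
  | _ => True

/-- Syntactically weakly restricted MSO. -/
def SWRMSO {K Δ : Type} : WMSO K Δ → Prop
  | .or φ ψ => SWRMSO φ ∧ SWRMSO ψ
  | .and φ ψ => SWRMSO φ ∧ SWRMSO ψ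
  | .exF _ φ => SWRMSO φ
  | .exS _ φ => SWRMSO φ
  | .alF _ φ => WUMSO φ ∧ SWRMSO φ
  | .alS _ φ => SyntUnamb φ ∧ SWRMSO φ
  | _ => True

/-- Formulae without set quantification. -/
def NoSetQuant {K Δ : Type} : WMSO K Δ → Prop
  | .or φ ψ => NoSetQuant φ ∧ NoSetQuant ψ
  | .and φ ψ => NoSetQuant φ ∧ NoSetQuant ψ
  | .exF _ φ => NoSetQuant φ
  | .alF _ φ => NoSetQuant φ
  | .exS _ _ => False
  | .alS _ _ => False
  | _ => True

/-- First-order fragment of `SRMSO`. -/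
def SRFO {K Δ : Type} (φ : WMSO K Δ) : Prop := SRMSO φ ∧ NoSetQuant φ

/-- `∃X₁.…∃Xₘ.ψ` with `ψ ∈ sRFO(K)`. -/
inductive SREMSO {K Δ : Type} : WMSO K Δ → Prop where
  | base {φ : WMSO K Δ} : SRFO φ → SREMSO φ
  | exS {X : ℕ} {φ : WMSO K Δ} : SREMSO φ → SREMSO (.exS X φ)

/-- A nested word series is `Z`-definable if it is the semantics of a sentence in `Z`. -/
def NWDefinable {K Δ : Type} [CommSemiring K] (Z : WMSO K Δ → Prop)
    (S : NestedWord Δ → K) : Prop :=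
  ∃ φ : WMSO K Δ, Z φ ∧ φ.Sentence ∧ ∀ nw γ1 γ2, φ.sem nw γ1 γ2 = S nw
/-- `K` is locally finite: every finitely generated subsemiring is finite. -/
def LocallyFiniteSemiring (K : Type) [CommSemiring K] : Prop :=
  ∀ s : Finset K, ((Subsemiring.closure (s : Set K) : Subsemiring K) : Set K).Finite


namespace NWProof

/-! ### Hedges: inductive presentation of nested words -/

inductive Hedge : Type where
  | nil : Hedge
  | int : Hedge → ℕ → Hedge
  | arch : Hedge → ℕ → Hedge → ℕ → Hedge

/-- `Wf a h b`: the hedge `h` occupies exactly the positions `a ≤ k < b`, in order. -/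
def Wf (a : ℕ) : Hedge → ℕ → Prop
  | .nil, b => a = b
  | .int h i, b => Wf a h i ∧ b = i + 1
  | .arch h i h1 j, b => Wf a h i ∧ Wf (i + 1) h1 j ∧ b = j + 1

def Arc : Hedge → ℕ → ℕ → Prop
  | .nil, _, _ => False
  | .int h _, k, l => Arc h k l
  | .arch h i h1 j, k, l => Arc h k l ∨ Arc h1 k l ∨ (k = i ∧ l = j)

/-- Internal and matched positions of `h` are correct with respect to `nw`. -/
def Good {Δ : Type} (nw : NestedWord Δ) : Hedge → Prop
  | .nil => True
  | .int h i => Good nw h ∧ ¬ nw.IsCall i ∧ ¬ nw.IsReturn i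
  | .arch h i h1 j => Good nw h ∧ Good nw h1 ∧ nw.rel i j

theorem Wf.le {h : Hedge} : ∀ {a b : ℕ}, Wf a h b → a ≤ b := by
  induction h with
  | nil => intro a b hw; exact le_of_eq hw
  | int h i ih => intro a b hw; have := ih hw.1; have := hw.2; omega
  | arch h i h1 j ih ih1 =>
    intro a b hw
    have := ih hw.1; have := ih1 hw.2.1; have := hw.2.2; omega

/-- A deterministic recogniser: a fold on hedges. -/
structure Rc (M L : Type) where
  m0 : M
  mint : M → L → M
  march : M → L → M → L → M

def Rc.fold {M L : Type} (R : Rc M L) (σ : ℕ → L) : Hedge → M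
  | .nil => R.m0
  | .int h i => R.mint (R.fold σ h) (σ i)
  | .arch h i h1 j => R.march (R.fold σ h) (σ i) (R.fold σ h1) (σ j)

theorem Rc.fold_congr {M L : Type} (R : Rc M L) {σ τ : ℕ → L} {h : Hedge} :
    ∀ {a b : ℕ}, Wf a h b → (∀ k, a ≤ k → k < b → σ k = τ k) → R.fold σ h = R.fold τ h := by
  induction h with
  | nil => intros; rfl
  | int h i ih =>
    intro a b hw he
    have h1 := hw.1.le
    have h2 := hw.2
    simp only [Rc.fold]
    rw [ih hw.1 (fun k hk hk' => he k hk (by omega)), he i (by omega) (by omega)]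
  | arch h i h1 j ih ih1 =>
    intro a b hw he
    have e1 := hw.1.le
    have e2 := hw.2.1.le
    have e3 := hw.2.2
    simp only [Rc.fold]
    rw [ih hw.1 (fun k hk hk' => he k hk (by omega)),
      ih1 hw.2.1 (fun k hk hk' => he k (by omega) (by omega)),
      he i (by omega) (by omega), he j (by omega) (by omega)]

/-- Recogniser induced by an associative concatenation. -/
def Rc.ofOp {M L : Type} (e : M) (op : M → M → M) (s : L → M) : Rc M L where
  m0 := e
  mint m l := op m (s l)
  march m l m1 l' := op (op (op m (s l)) m1) (s l')

theorem Rc.fold_ofOp {M L : Type} (e : M) (op : M → M → M) (s : L → M) (σ : ℕ → L)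
    (V : ℕ → ℕ → M) (h0 : ∀ a, V a a = e)
    (hm : ∀ a b c, a ≤ b → b ≤ c → op (V a b) (V b c) = V a c)
    (hs : ∀ i, V i (i + 1) = s (σ i)) {h : Hedge} :
    ∀ {a b : ℕ}, Wf a h b → (Rc.ofOp e op s).fold σ h = V a b := by
  induction h with
  | nil => intro a b hw; cases hw; exact (h0 a).symm
  | int h i ih =>
    intro a b hw
    obtain ⟨hw, rfl⟩ := hw
    have := hw.le
    simp only [Rc.fold, ih hw]
    simp only [Rc.ofOp]
    rw [← hs, hm _ _ _ (by omega) (by omega)]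
  | arch h i h1 j ih ih1 =>
    intro a b hw
    obtain ⟨hw, hw1, rfl⟩ := hw
    have := hw.le
    have := hw1.le
    simp only [Rc.fold, ih hw, ih1 hw1]
    simp only [Rc.ofOp]
    rw [← hs, ← hs, hm _ _ _ (by omega) (by omega), hm _ _ _ (by omega) (by omega),
      hm _ _ _ (by omega) (by omega)]

def Rc.prod {M M' L : Type} (R : Rc M L) (R' : Rc M' L) : Rc (M × M') L where
  m0 := (R.m0, R'.m0)
  mint m l := (R.mint m.1 l, R'.mint m.2 l)
  march m l m1 l' := (R.march m.1 l m1.1 l', R'.march m.2 l m1.2 l')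

theorem Rc.fold_prod {M M' L : Type} (R : Rc M L) (R' : Rc M' L) (σ : ℕ → L) (h : Hedge) :
    (R.prod R').fold σ h = (R.fold σ h, R'.fold σ h) := by
  induction h with
  | nil => rfl
  | int h i ih => simp [Rc.fold, ih]; simp [Rc.prod]
  | arch h i h1 j ih ih1 => simp [Rc.fold, ih, ih1]; simp [Rc.prod]

/-! ### Every nested word is a hedge -/

theorem exists_hedge_aux {Δ : Type} (nw : NestedWord Δ) : ∀ (d a b : ℕ), b = a + d → 1 ≤ a →
    b ≤ nw.len + 1 → (∀ i j, nw.rel i j → (a ≤ i ∧ i < b ↔ a ≤ j ∧ j < b)) →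
    ∃ h, Wf a h b ∧ Good nw h ∧ ∀ i j, Arc h i j ↔ (nw.rel i j ∧ a ≤ i ∧ i < b) := by
  intro d
  induction d using Nat.strong_induction_on with
  | _ d ih =>
  intro a b hb ha hbn hc
  obtain ⟨p1, p2, p3, p4⟩ := nw.isNest
  rcases Nat.eq_zero_or_pos d with rfl | hd
  · refine ⟨.nil, by simp [Wf, hb], trivial, ?_⟩
    intro i j
    simp only [Arc, false_iff]
    omega
  · by_cases hr : ∃ i, nw.rel i (b - 1)
    · obtain ⟨i, hi⟩ := hr
      have q1 := p1 _ _ hi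
      have q2 := hc _ _ hi
      obtain ⟨h, hw, hG, hA⟩ := ih (i - a) (by omega) a i (by omega) ha (by omega) (by
        intro k l hkl
        have q3 := p1 _ _ hkl
        have q4 := hc _ _ hkl
        have q5 := p4 _ _ _ _ hkl hi
        have q6 := p4 _ _ _ _ hi hkl
        have q7 : k = i → l = b - 1 := fun e => p2 _ _ _ (e ▸ hkl) hi
        have q8 : l = b - 1 → k = i := fun e => p3 _ _ _ (e ▸ hkl) hi
        omega)
      obtain ⟨h1, hw1, hG1, hA1⟩ := ih (b - 1 - (i + 1)) (by omega) (i + 1) (b - 1) (by omega) (by omega)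
        (by omega) (by
        intro k l hkl
        have q3 := p1 _ _ hkl
        have q4 := hc _ _ hkl
        have q5 := p4 _ _ _ _ hkl hi
        have q6 := p4 _ _ _ _ hi hkl
        have q7 : k = i → l = b - 1 := fun e => p2 _ _ _ (e ▸ hkl) hi
        have q8 : l = b - 1 → k = i := fun e => p3 _ _ _ (e ▸ hkl) hi
        omega)
      refine ⟨.arch h i h1 (b - 1), ⟨hw, hw1, by omega⟩, ⟨hG, hG1, hi⟩, ?_⟩
      intro k l
      simp only [Arc, hA, hA1]
      constructor
      · rintro (⟨h, h'⟩ | ⟨h, h'⟩ | ⟨rfl, rfl⟩)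
        · exact ⟨h, by omega⟩
        · exact ⟨h, by omega⟩
        · exact ⟨hi, by omega⟩
      · rintro ⟨hkl, h1, h2⟩
        have q3 := p1 _ _ hkl
        have q4 := hc _ _ hkl
        have q7 : k = i → l = b - 1 := fun e => p2 _ _ _ (e ▸ hkl) hi
        simp only [hkl, true_and]
        omega
    · have q0 : ∀ k, ¬ nw.rel k (b - 1) := fun k hk => hr ⟨k, hk⟩
      obtain ⟨h, hw, hG, hA⟩ := ih (d - 1) (by omega) a (b - 1) (by omega) ha (by omega) (by
        intro k l hkl
        have q3 := p1 _ _ hkl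
        have q4 := hc _ _ hkl
        have q8 : l ≠ b - 1 := fun e => q0 k (e ▸ hkl)
        omega)
      refine ⟨.int h (b - 1), ⟨hw, by omega⟩, ⟨hG, ?_, hr⟩, ?_⟩
      · rintro ⟨l, hl⟩
        have q3 := p1 _ _ hl
        have q4 := hc _ _ hl
        omega
      intro k l
      simp only [Arc, hA]
      constructor
      · rintro ⟨h, h'⟩
        exact ⟨h, by omega⟩
      · rintro ⟨hkl, h1, h2⟩
        have q3 := p1 _ _ hkl
        have q4 := hc _ _ hkl
        have q8 : l ≠ b - 1 := fun e => q0 k (e ▸ hkl)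
        simp only [hkl, true_and]
        omega

theorem exists_hedge {Δ : Type} (nw : NestedWord Δ) :
    ∃ h, Wf 1 h (nw.len + 1) ∧ Good nw h ∧ ∀ i j, Arc h i j ↔ nw.rel i j := by
  have p1 := nw.isNest.1
  obtain ⟨h, hw, hG, hA⟩ := exists_hedge_aux nw nw.len 1 (nw.len + 1) (by omega) le_rfl le_rfl (by
    intro i j hij
    have := p1 _ _ hij
    simp only [NestedWord.len]; omega)
  refine ⟨h, hw, hG, fun i j => (hA i j).trans ⟨fun h => h.1, fun h => ⟨h, ?_⟩⟩⟩
  have := p1 _ _ h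
  simp only [NestedWord.len]; omega

/-! ### Summing a recognisable function over all relabelings of one track -/

section Count

open Classical

variable {M L : Type} [Fintype M]

noncomputable def pf {N : Type} [CommSemiring N] (v : M → N) (f : M → M) : M → N :=
  fun m => ∑ m', if f m' = m then v m' else 0

noncomputable def pf2 {N : Type} [CommSemiring N] (v w : M → N) (f : M → M → M) : M → N :=
  fun m => ∑ m', ∑ m1, if f m' m1 = m then v m' * w m1 else 0

noncomputable def ev {A : Type} [AddCommMonoid A] (v : M → ℕ) (g : M → A) : A := ∑ m, v m • g m

theorem ev_add {A : Type} [AddCommMonoid A] (v w : M → ℕ) (g : M → A) :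
    ev (v + w) g = ev v g + ev w g := by
  simp [ev, add_smul, Finset.sum_add_distrib]

theorem ev_pf {A : Type} [AddCommMonoid A] (v : M → ℕ) (f : M → M) (g : M → A) :
    ev (pf v f) g = ev v (fun m => g (f m)) := by
  simp only [ev, pf, Finset.sum_smul]
  rw [Finset.sum_comm]
  refine Finset.sum_congr rfl fun m _ => ?_
  simp [ite_smul]

theorem ev_pf2 {A : Type} [AddCommMonoid A] (v w : M → ℕ) (f : M → M → M) (g : M → A) :
    ev (pf2 v w f) g = ev v (fun m => ev w fun m1 => g (f m m1)) := by
  simp only [ev, pf2, Finset.sum_smul]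
  rw [Finset.sum_comm]
  refine Finset.sum_congr rfl fun m _ => ?_
  rw [Finset.sum_comm, Finset.smul_sum]
  refine Finset.sum_congr rfl fun m1 _ => ?_
  simp [ite_smul, mul_smul]

noncomputable def cnt (N : Type) [CommSemiring N] (R : Rc M L) (rl : L → Prop → L) :
    Rc (M → N) L where
  m0 := fun m => if R.m0 = m then 1 else 0
  mint v l := pf v (fun m => R.mint m (rl l False)) + pf v (fun m => R.mint m (rl l True))
  march v l w l' :=
    (pf2 v w (fun m m1 => R.march m (rl l False) m1 (rl l' False)) +
     pf2 v w (fun m m1 => R.march m (rl l False) m1 (rl l' True))) +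
    (pf2 v w (fun m m1 => R.march m (rl l True) m1 (rl l' False)) +
     pf2 v w (fun m m1 => R.march m (rl l True) m1 (rl l' True)))

theorem cnt_arch (N : Type) [CommSemiring N] (R : Rc M L) (rl : L → Prop → L) (σ : ℕ → L)
    (h : Hedge) (i : ℕ) (h1 : Hedge) (j : ℕ) :
    (cnt N R rl).fold σ (.arch h i h1 j) =
    (pf2 ((cnt N R rl).fold σ h) ((cnt N R rl).fold σ h1)
        (fun m m1 => R.march m (rl (σ i) False) m1 (rl (σ j) False)) +
     pf2 ((cnt N R rl).fold σ h) ((cnt N R rl).fold σ h1)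
        (fun m m1 => R.march m (rl (σ i) False) m1 (rl (σ j) True))) +
    (pf2 ((cnt N R rl).fold σ h) ((cnt N R rl).fold σ h1)
        (fun m m1 => R.march m (rl (σ i) True) m1 (rl (σ j) False)) +
     pf2 ((cnt N R rl).fold σ h) ((cnt N R rl).fold σ h1)
        (fun m m1 => R.march m (rl (σ i) True) m1 (rl (σ j) True))) := rfl

theorem sum_powerset_disj {A : Type} [AddCommMonoid A] (s t : Finset ℕ) (hd : Disjoint s t)
    (F : Finset ℕ → A) :
    ∑ T ∈ (s ∪ t).powerset, F T = ∑ T ∈ s.powerset, ∑ U ∈ t.powerset, F (T ∪ U) := by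
  rw [← Finset.sum_product']
  symm
  refine Finset.sum_nbij' (fun p => p.1 ∪ p.2) (fun T => (T ∩ s, T ∩ t)) ?_ ?_ ?_ ?_ ?_
  · rintro ⟨T, U⟩ h
    simp only [Finset.mem_product, Finset.mem_powerset] at h ⊢
    exact Finset.union_subset_union h.1 h.2
  · intro T _
    simp
  · rintro ⟨T, U⟩ h
    simp only [Finset.mem_product, Finset.mem_powerset] at h
    have hd' := Finset.disjoint_left.1 hd
    ext x
    · simp only [Finset.mem_inter, Finset.mem_union]
      constructor
      · rintro ⟨h1 | h1, h2⟩
        · exact h1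
        · exact absurd (h.2 h1) (hd' h2)
      · intro h1; exact ⟨Or.inl h1, h.1 h1⟩
    · simp only [Finset.mem_inter, Finset.mem_union]
      constructor
      · rintro ⟨h1 | h1, h2⟩
        · exact absurd h2 (hd' (h.1 h1))
        · exact h1
      · intro h1; exact ⟨Or.inr h1, h.2 h1⟩
  · intro T hT
    simp only [Finset.mem_powerset] at hT
    rw [← Finset.inter_union_distrib_left]
    exact Finset.inter_eq_left.2 hT
  · intros; rfl

theorem sum_powerset_snoc {A : Type} [AddCommMonoid A] (s : Finset ℕ) (i : ℕ) (hi : i ∉ s)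
    (F : Finset ℕ → A) :
    ∑ T ∈ (insert i s).powerset, F T = ∑ T ∈ s.powerset, (F T + F (insert i T)) := by
  rw [Finset.sum_powerset_insert hi, Finset.sum_add_distrib]

theorem cnt_sum {A : Type} [AddCommMonoid A] (R : Rc M L) (rl : L → Prop → L) (σ : ℕ → L)
    {h : Hedge} : ∀ {a b : ℕ}, Wf a h b → ∀ g : M → A,
    ∑ T ∈ (Finset.Ico a b).powerset, g (R.fold (fun i => rl (σ i) (i ∈ T)) h) =
      ev ((cnt ℕ R rl).fold σ h) g := by
  induction h with
  | nil =>
    intro a b hw g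
    cases hw
    simp [Rc.fold, cnt, ev, ite_smul]
  | int h i ih =>
    intro a b hw g
    obtain ⟨hw, rfl⟩ := hw
    have hle := hw.le
    have e : Finset.Ico a (i + 1) = insert i (Finset.Ico a i) := by ext; simp; omega
    rw [e, sum_powerset_snoc _ _ (by simp)]
    have : ∀ T ∈ (Finset.Ico a i).powerset,
        g (R.fold (fun k => rl (σ k) (k ∈ T)) (.int h i)) +
        g (R.fold (fun k => rl (σ k) (k ∈ insert i T)) (.int h i)) =
        g (R.mint (R.fold (fun k => rl (σ k) (k ∈ T)) h) (rl (σ i) False)) +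
        g (R.mint (R.fold (fun k => rl (σ k) (k ∈ T)) h) (rl (σ i) True)) := by
      intro T hT
      have hT' : i ∉ T := fun hi => by
        have := Finset.mem_powerset.1 hT hi
        simp at this
      simp only [Rc.fold]
      rw [R.fold_congr (σ := fun k => rl (σ k) (k ∈ insert i T))
        (τ := fun k => rl (σ k) (k ∈ T)) hw]
      · simp [hT']
      · intro k _ hk
        have : k ≠ i := by omega
        simp [this]
    rw [Finset.sum_congr rfl this, Finset.sum_add_distrib,
      ih hw (fun m => g (R.mint m (rl (σ i) False))), ih hw (fun m => g (R.mint m (rl (σ i) True)))]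
    simp only [Rc.fold]
    conv_rhs => simp only [cnt]
    rw [ev_add, ev_pf, ev_pf]
    rfl
  | arch h i h1 j ih ih1 =>
    intro a b hw g
    obtain ⟨hw, hw1, rfl⟩ := hw
    have hle := hw.le
    have hle1 := hw1.le
    have e : Finset.Ico a (j + 1) =
      Finset.Ico a i ∪ insert i (insert j (Finset.Ico (i + 1) j)) := by ext; simp; omega
    rw [e, sum_powerset_disj _ _ (by
      rw [Finset.disjoint_left]; intro x; simp; omega)]
    have : ∀ T ∈ (Finset.Ico a i).powerset,
        ∑ U ∈ (insert i (insert j (Finset.Ico (i + 1) j))).powerset,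
          g (R.fold (fun k => rl (σ k) (k ∈ T ∪ U)) (.arch h i h1 j)) =
        ev ((cnt ℕ R rl).fold σ h1) (fun m1 => g (R.march
            (R.fold (fun k => rl (σ k) (k ∈ T)) h) (rl (σ i) False) m1 (rl (σ j) False))) +
        ev ((cnt ℕ R rl).fold σ h1) (fun m1 => g (R.march
            (R.fold (fun k => rl (σ k) (k ∈ T)) h) (rl (σ i) False) m1 (rl (σ j) True))) +
        (ev ((cnt ℕ R rl).fold σ h1) (fun m1 => g (R.march
            (R.fold (fun k => rl (σ k) (k ∈ T)) h) (rl (σ i) True) m1 (rl (σ j) False))) +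
        ev ((cnt ℕ R rl).fold σ h1) (fun m1 => g (R.march
            (R.fold (fun k => rl (σ k) (k ∈ T)) h) (rl (σ i) True) m1 (rl (σ j) True)))) := by
      intro T hT
      have hT' : ∀ k ∈ T, a ≤ k ∧ k < i := fun k hk => by
        have := Finset.mem_powerset.1 hT hk
        simpa using this
      rw [sum_powerset_snoc _ _ (by simp; omega), sum_powerset_snoc _ _ (by simp),
        ← ih1 hw1, ← ih1 hw1, ← ih1 hw1, ← ih1 hw1, ← Finset.sum_add_distrib,
        ← Finset.sum_add_distrib, ← Finset.sum_add_distrib]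
      refine Finset.sum_congr rfl fun U hU => ?_
      have hU' : ∀ k ∈ U, i + 1 ≤ k ∧ k < j := fun k hk => by
        have := Finset.mem_powerset.1 hU hk
        simpa using this
      have key : ∀ (W : Finset ℕ) (p q : Prop), (∀ k, k ∈ W ↔ (k ∈ U ∨ (k = i ∧ p) ∨ (k = j ∧ q))) →
          R.fold (fun k => rl (σ k) (k ∈ T ∪ W)) (.arch h i h1 j) =
          R.march (R.fold (fun k => rl (σ k) (k ∈ T)) h) (rl (σ i) p)
            (R.fold (fun k => rl (σ k) (k ∈ U)) h1) (rl (σ j) q) := by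
        intro W p q hW
        have hTk : ∀ k, i ≤ k → k ∉ T := fun k hk hk' => by have := hT' k hk'; omega
        have hUk : ∀ k, (k ≤ i ∨ j ≤ k) → k ∉ U := fun k hk hk' => by have := hU' k hk'; omega
        simp only [Rc.fold]
        rw [R.fold_congr (σ := fun k => rl (σ k) (k ∈ T ∪ W))
          (τ := fun k => rl (σ k) (k ∈ T)) hw,
          R.fold_congr (σ := fun k => rl (σ k) (k ∈ T ∪ W))
          (τ := fun k => rl (σ k) (k ∈ U)) hw1]
        · have e1 : (i ∈ T ∪ W) = p := by
            have : i ≠ j := by omega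
            simp [hW, hTk i le_rfl, hUk i (by omega), this]
          have e2 : (j ∈ T ∪ W) = q := by
            have : j ≠ i := by omega
            simp [hW, hTk j (by omega), hUk j (by omega), this]
          rw [e1, e2]
        · intro k hk hk'
          have h1 : k ≠ i := by omega
          have h2 : k ≠ j := by omega
          simp [hW, hTk k (by omega), h1, h2]
        · intro k hk hk'
          have h1 : k ≠ i := by omega
          have h2 : k ≠ j := by omega
          simp [hW, hUk k (by omega), h1, h2]
      rw [key U False False (by simp), key (insert j U) False True (by intro k; simp; tauto),
        key (insert i U) True False (by intro k; simp; tauto),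
        key (insert i (insert j U)) True True (by intro k; simp; tauto)]
      abel
    rw [Finset.sum_congr rfl this, Finset.sum_add_distrib, Finset.sum_add_distrib,
      Finset.sum_add_distrib]
    have ih' := fun G : M → A => ih hw G
    have hf := cnt_arch (M := M) ℕ R rl σ h i h1 j
    rw [hf]
    simp only [ev_add, ev_pf2]
    rw [← ih', ← ih', ← ih', ← ih']

theorem cnt_map {N N' : Type} [CommSemiring N] [CommSemiring N'] (π : N →+* N') (R : Rc M L)
    (rl : L → Prop → L) (σ : ℕ → L) (h : Hedge) :
    (cnt N' R rl).fold σ h = fun m => π ((cnt N R rl).fold σ h m) := by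
  induction h with
  | nil => funext m; simp only [Rc.fold, cnt]; split_ifs <;> simp
  | int h i ih =>
    simp only [Rc.fold, ih]
    funext m
    simp [cnt, pf, apply_ite π]
  | arch h i h1 j ih ih1 =>
    simp only [Rc.fold, ih, ih1]
    funext m
    simp [cnt, pf2, apply_ite π]

def expCon {A : Type} [AddCommMonoid A] (g : M → A) : RingCon ℕ where
  r c d := ∀ m, c • g m = d • g m
  iseqv := ⟨fun _ _ => rfl, fun h m => (h m).symm, fun h h' m => (h m).trans (h' m)⟩
  add' := by
    intro a b c d h h' m
    rw [add_smul, add_smul, h, h']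
  mul' := by
    intro a b c d h h' m
    rw [mul_smul, h', ← mul_smul, mul_comm, mul_smul, h, ← mul_smul, mul_comm]

theorem expCon_finite {A : Type} [AddCommMonoid A] (g : M → A)
    (hg : ∀ m, (Set.range fun c : ℕ => c • g m).Finite) : Finite (expCon g).Quotient := by
  have : ∀ m, Finite (Set.range fun c : ℕ => c • g m) := fun m => (hg m).to_subtype
  let F : (expCon g).Quotient → (∀ m, Set.range fun c : ℕ => c • g m) :=
    fun q => Quotient.lift (s := (expCon g).toSetoid)
      (fun c m => (⟨c • g m, c, rfl⟩ : Set.range fun c : ℕ => c • g m))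
      (fun c d h => by funext m; exact Subtype.ext (h m)) q
  refine Finite.of_injective F ?_
  intro p q
  induction p using Quotient.inductionOn with | _ p =>
  induction q using Quotient.inductionOn with | _ q =>
  intro h
  refine Quotient.sound (s := (expCon g).toSetoid) ?_
  intro m
  have := congrArg Subtype.val (congrFun h m)
  exact this

theorem exists_sum_rec {A : Type} [AddCommMonoid A] (R : Rc M L) (rl : L → Prop → L) (g : M → A)
    (hg : ∀ m, (Set.range fun c : ℕ => c • g m).Finite) :
    ∃ (M' : Type) (_ : Finite M') (R' : Rc M' L) (out : M' → A), ∀ (σ : ℕ → L) (h : Hedge) (a b : ℕ),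
      Wf a h b → ∑ T ∈ (Finset.Ico a b).powerset, g (R.fold (fun i => rl (σ i) (i ∈ T)) h) =
        out (R'.fold σ h) := by
  have := expCon_finite g hg
  refine ⟨M → (expCon g).Quotient, inferInstance, cnt _ R rl,
    fun v => ∑ m, (Quotient.out (s := (expCon g).toSetoid) (v m)) • g m, ?_⟩
  intro σ h a b hw
  rw [cnt_sum R rl σ hw g, cnt_map (expCon g).mk' R rl σ h, ev]
  refine Finset.sum_congr rfl fun m _ => ?_
  have := Quotient.mk_out (s := (expCon g).toSetoid) ((cnt ℕ R rl).fold σ h m)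
  exact (this m).symm

end Count

/-! ### From formulae to recognisers -/

section Logic

open Classical

variable {K Δ : Type} [CommSemiring K]

abbrev Lb (Δ : Type) := Δ × (ℕ → Prop) × (ℕ → Prop)

def enc (nw : NestedWord Δ) (γ1 : ℕ → ℕ) (γ2 : ℕ → Finset ℕ) : ℕ → Lb Δ :=
  fun i => (nw.letter i, fun x => γ1 x = i, fun X => i ∈ γ2 X)

/-- `F` is computed by a finite fold over the hedge of the (encoded) nested word. -/
def Recog {A : Type} (F : NestedWord Δ → (ℕ → ℕ) → (ℕ → Finset ℕ) → A) : Prop :=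
  ∃ (M : Type) (_ : Finite M) (R : Rc M (Lb Δ)) (out : M → A),
    ∀ nw γ1 γ2 h, (∀ x, 1 ≤ γ1 x ∧ γ1 x < nw.len + 1) → Wf 1 h (nw.len + 1) →
      (∀ i j, Arc h i j ↔ nw.rel i j) → F nw γ1 γ2 = out (R.fold (enc nw γ1 γ2) h)

theorem Recog.comp {A B : Type} {F : NestedWord Δ → (ℕ → ℕ) → (ℕ → Finset ℕ) → A}
    (hF : Recog F) (f : A → B) : Recog (fun nw γ1 γ2 => f (F nw γ1 γ2)) := by
  obtain ⟨M, hM, R, out, h⟩ := hF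
  exact ⟨M, hM, R, fun m => f (out m), fun nw γ1 γ2 hd h1 h2 h3 => by
    beta_reduce
    rw [h nw γ1 γ2 hd h1 h2 h3]⟩

theorem Recog.comp2 {A B C : Type} {F : NestedWord Δ → (ℕ → ℕ) → (ℕ → Finset ℕ) → A}
    {G : NestedWord Δ → (ℕ → ℕ) → (ℕ → Finset ℕ) → B}
    (hF : Recog F) (hG : Recog G) (f : A → B → C) :
    Recog (fun nw γ1 γ2 => f (F nw γ1 γ2) (G nw γ1 γ2)) := by
  obtain ⟨M, hM, R, out, h⟩ := hF
  obtain ⟨M', hM', R', out', h'⟩ := hG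
  exact ⟨M × M', inferInstance, R.prod R', fun m => f (out m.1) (out' m.2),
    fun nw γ1 γ2 hd h1 h2 h3 => by
      beta_reduce
      rw [h nw γ1 γ2 hd h1 h2 h3, h' nw γ1 γ2 hd h1 h2 h3, Rc.fold_prod]⟩

theorem Recog.const {A : Type} (k : A) : Recog (Δ := Δ) (fun _ _ _ => k) :=
  ⟨Unit, inferInstance, ⟨(), fun _ _ => (), fun _ _ _ _ => ()⟩, fun _ => k, fun _ _ _ _ _ _ _ => rfl⟩

theorem Recog.exists_pos (p : Lb Δ → Prop) : Recog (Δ := Δ) (fun nw γ1 γ2 =>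
    ∃ i, 1 ≤ i ∧ i < nw.len + 1 ∧ p (enc nw γ1 γ2 i)) := by
  refine ⟨Prop, inferInstance, Rc.ofOp False Or p, id, ?_⟩
  intro nw γ1 γ2 h _ hw _
  rw [Rc.fold_ofOp False Or p (enc nw γ1 γ2)
    (fun a b => ∃ i, a ≤ i ∧ i < b ∧ p (enc nw γ1 γ2 i)) _ _ _ hw]
  · rfl
  · intro a
    simp only [eq_iff_iff, iff_false, not_exists]
    rintro i ⟨h1, h2, _⟩; omega
  · intro a b c hab hbc
    apply propext
    constructor
    · rintro (⟨i, h1, h2, h3⟩ | ⟨i, h1, h2, h3⟩)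
      · exact ⟨i, h1, by omega, h3⟩
      · exact ⟨i, by omega, h2, h3⟩
    · rintro ⟨i, h1, h2, h3⟩
      rcases lt_or_ge i b with h | h
      · exact Or.inl ⟨i, h1, h, h3⟩
      · exact Or.inr ⟨i, h, h2, h3⟩
  · intro i
    apply propext
    constructor
    · rintro ⟨k, h1, h2, h3⟩
      obtain rfl : k = i := by omega
      exact h3
    · intro h; exact ⟨i, le_rfl, by omega, h⟩

def leOp (u v : Prop × Prop × Prop) : Prop × Prop × Prop :=
  (u.1 ∨ v.1, u.2.1 ∨ v.2.1, u.2.2 ∨ v.2.2 ∨ (u.1 ∧ v.2.1))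

theorem Recog.exists_le (p q : Lb Δ → Prop) : Recog (Δ := Δ) (fun nw γ1 γ2 =>
    ∃ i j, 1 ≤ i ∧ i ≤ j ∧ j < nw.len + 1 ∧ p (enc nw γ1 γ2 i) ∧ q (enc nw γ1 γ2 j)) := by
  refine ⟨Prop × Prop × Prop, inferInstance,
    Rc.ofOp (False, False, False) leOp (fun l => (p l, q l, p l ∧ q l)), fun u => u.2.2, ?_⟩
  intro nw γ1 γ2 h _ hw _
  beta_reduce
  generalize enc nw γ1 γ2 = σ
  rw [Rc.fold_ofOp (False, False, False) leOp (fun l => (p l, q l, p l ∧ q l)) σ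
    (fun a b => (∃ i, a ≤ i ∧ i < b ∧ p (σ i), ∃ i, a ≤ i ∧ i < b ∧ q (σ i),
      ∃ i j, a ≤ i ∧ i ≤ j ∧ j < b ∧ p (σ i) ∧ q (σ j))) _ _ _ hw]
  · intro a
    refine Prod.ext ?_ (Prod.ext ?_ ?_)
    · simp only [eq_iff_iff, iff_false, not_exists]
      rintro i ⟨h1, h2, _⟩; omega
    · simp only [eq_iff_iff, iff_false, not_exists]
      rintro i ⟨h1, h2, _⟩; omega
    · simp only [eq_iff_iff, iff_false, not_exists]
      rintro i j ⟨h1, h2, h3, _⟩; omega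
  · intro a b c hab hbc
    have aux : ∀ p : Lb Δ → Prop, ((∃ i, a ≤ i ∧ i < b ∧ p (σ i)) ∨ (∃ i, b ≤ i ∧ i < c ∧ p (σ i))) =
        ∃ i, a ≤ i ∧ i < c ∧ p (σ i) := by
      intro p
      apply propext
      constructor
      · rintro (⟨i, h1, h2, h3⟩ | ⟨i, h1, h2, h3⟩)
        · exact ⟨i, h1, by omega, h3⟩
        · exact ⟨i, by omega, h2, h3⟩
      · rintro ⟨i, h1, h2, h3⟩
        rcases lt_or_ge i b with h | h
        · exact Or.inl ⟨i, h1, h, h3⟩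
        · exact Or.inr ⟨i, h, h2, h3⟩
    refine Prod.ext (aux p) (Prod.ext (aux q) ?_)
    apply propext
    constructor
    · rintro (⟨i, j, h1, h2, h3, h4⟩ | ⟨i, j, h1, h2, h3, h4⟩ | ⟨⟨i, h1, h2, h3⟩, ⟨j, h4, h5, h6⟩⟩)
      · exact ⟨i, j, h1, h2, by omega, h4⟩
      · exact ⟨i, j, by omega, h2, by omega, h4⟩
      · exact ⟨i, j, by omega, by omega, by omega, h3, h6⟩
    · rintro ⟨i, j, h1, h2, h3, h4, h5⟩
      rcases lt_or_ge j b with h | h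
      · exact Or.inl ⟨i, j, h1, h2, h, h4, h5⟩
      · rcases lt_or_ge i b with h' | h'
        · exact Or.inr (Or.inr ⟨⟨i, h1, h', h4⟩, ⟨j, h, h3, h5⟩⟩)
        · exact Or.inr (Or.inl ⟨i, j, h', h2, h3, h4, h5⟩)
  · intro i
    have aux : ∀ p : Lb Δ → Prop, (∃ k, i ≤ k ∧ k < i + 1 ∧ p (σ k)) = p (σ i) := by
      intro p
      apply propext
      constructor
      · rintro ⟨k, h1, h2, h3⟩
        obtain rfl : k = i := by omega
        exact h3
      · intro h; exact ⟨i, le_rfl, by omega, h⟩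
    refine Prod.ext (aux p) (Prod.ext (aux q) ?_)
    apply propext
    constructor
    · rintro ⟨k, l, h1, h2, h3, h4, h5⟩
      obtain rfl : k = i := by omega
      obtain rfl : l = k := by omega
      exact ⟨h4, h5⟩
    · rintro ⟨h, h'⟩; exact ⟨i, i, le_rfl, le_rfl, by omega, h, h'⟩

theorem Recog.exists_arc (p q : Lb Δ → Prop) : Recog (Δ := Δ) (fun nw γ1 γ2 =>
    ∃ i j, nw.rel i j ∧ p (enc nw γ1 γ2 i) ∧ q (enc nw γ1 γ2 j)) := by
  refine ⟨Prop, inferInstance, ⟨False, fun m _ => m, fun m l m1 l' => m ∨ m1 ∨ (p l ∧ q l')⟩, id, ?_⟩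
  intro nw γ1 γ2 h _ _ hA
  simp only [← hA]
  generalize enc nw γ1 γ2 = σ
  clear hA
  rename_i hw
  clear hw
  simp only [id]
  induction h with
  | nil => simp [Arc, Rc.fold]
  | int h i ih => simpa [Arc, Rc.fold] using ih
  | arch h i h1 j ih ih1 =>
    simp only [Arc, Rc.fold]
    rw [← ih, ← ih1]
    apply propext
    constructor
    · rintro ⟨k, l, h | h | ⟨rfl, rfl⟩, h'⟩
      · exact Or.inl ⟨k, l, h, h'⟩
      · exact Or.inr (Or.inl ⟨k, l, h, h'⟩)
      · exact Or.inr (Or.inr h')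
    · rintro (⟨k, l, h, h'⟩ | ⟨k, l, h, h'⟩ | h')
      · exact ⟨k, l, Or.inl h, h'⟩
      · exact ⟨k, l, Or.inr (Or.inl h), h'⟩
      · exact ⟨i, j, Or.inr (Or.inr ⟨rfl, rfl⟩), h'⟩

/-- Changing `F` on valid assignments only. -/
theorem Recog.congr {A : Type} {F G : NestedWord Δ → (ℕ → ℕ) → (ℕ → Finset ℕ) → A}
    (hF : Recog F) (h : ∀ nw γ1 γ2, (∀ x, 1 ≤ γ1 x ∧ γ1 x < nw.len + 1) →
      G nw γ1 γ2 = F nw γ1 γ2) : Recog G := by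
  obtain ⟨M, hM, R, out, h'⟩ := hF
  exact ⟨M, hM, R, out, fun nw γ1 γ2 hd h1 h2 h3 => by
    rw [h _ _ _ h1, h' nw γ1 γ2 hd h1 h2 h3]⟩

theorem Recog.eqv (x y : ℕ) : Recog (Δ := Δ) (fun _ γ1 _ => γ1 x = γ1 y) := by
  refine (Recog.exists_pos (fun l => l.2.1 x ∧ l.2.1 y)).congr ?_
  intro nw γ1 γ2 hv
  apply propext
  constructor
  · intro h; exact ⟨γ1 x, (hv x).1, (hv x).2, rfl, h.symm⟩
  · rintro ⟨i, _, _, h1, h2⟩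
    exact Eq.trans h1 (Eq.symm h2)

theorem Recog.lab (a : Δ) (x : ℕ) : Recog (Δ := Δ) (fun nw γ1 _ => nw.letter (γ1 x) = a) := by
  refine (Recog.exists_pos (fun l => l.2.1 x ∧ l.1 = a)).congr ?_
  intro nw γ1 γ2 hv
  apply propext
  constructor
  · intro h; exact ⟨γ1 x, (hv x).1, (hv x).2, rfl, h⟩
  · rintro ⟨i, _, _, h1, h2⟩
    simp only [enc] at h1 h2
    rw [h1, h2]

theorem Recog.mem (x X : ℕ) : Recog (Δ := Δ) (fun _ γ1 γ2 => γ1 x ∈ γ2 X) := by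
  refine (Recog.exists_pos (fun l => l.2.1 x ∧ l.2.2 X)).congr ?_
  intro nw γ1 γ2 hv
  apply propext
  constructor
  · intro h; exact ⟨γ1 x, (hv x).1, (hv x).2, rfl, h⟩
  · rintro ⟨i, _, _, h1, h2⟩
    simp only [enc] at h1 h2
    rwa [h1]

theorem Recog.lev (x y : ℕ) : Recog (Δ := Δ) (fun _ γ1 _ => γ1 x ≤ γ1 y) := by
  refine (Recog.exists_le (fun l => l.2.1 x) (fun l => l.2.1 y)).congr ?_
  intro nw γ1 γ2 hv
  apply propext
  constructor
  · intro h; exact ⟨γ1 x, γ1 y, (hv x).1, h, (hv y).2, rfl, rfl⟩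
  · rintro ⟨i, j, _, h, _, h1, h2⟩
    simp only [enc] at h1 h2
    omega

theorem Recog.nuv (x y : ℕ) : Recog (Δ := Δ) (fun nw γ1 _ => nw.rel (γ1 x) (γ1 y)) := by
  refine (Recog.exists_arc (fun l => l.2.1 x) (fun l => l.2.1 y)).congr ?_
  intro nw γ1 γ2 hv
  apply propext
  constructor
  · intro h; exact ⟨γ1 x, γ1 y, h, rfl, rfl⟩
  · rintro ⟨i, j, h, h1, h2⟩
    simp only [enc] at h1 h2
    rwa [h1, h2]

/-- Set quantification in an arbitrary commutative monoid. -/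
theorem Recog.sumS {A : Type} [AddCommMonoid A]
    (hA : ∀ a : A, (Set.range fun c : ℕ => c • a).Finite)
    {F : NestedWord Δ → (ℕ → ℕ) → (ℕ → Finset ℕ) → A} (hF : Recog F) (X : ℕ) :
    Recog (fun nw γ1 γ2 => ∑ T ∈ (Finset.Icc 1 nw.len).powerset,
      F nw γ1 (Function.update γ2 X T)) := by
  obtain ⟨M, hM, R, out, h⟩ := hF
  have := Fintype.ofFinite M
  obtain ⟨M', hM', R', out', h'⟩ := exists_sum_rec R
    (fun l p => (l.1, l.2.1, Function.update l.2.2 X p)) out (fun m => hA (out m))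
  refine ⟨M', hM', R', out', ?_⟩
  intro nw γ1 γ2 hd h1 h2 h3
  rw [← h' _ _ _ _ h2]
  refine Finset.sum_congr rfl fun T _ => ?_
  rw [h nw γ1 _ hd h1 h2 h3]
  congr 2
  funext i
  refine Prod.ext rfl (Prod.ext rfl ?_)
  funext Y
  by_cases hY : Y = X
  · subst hY; simp [enc]
  · simp [enc, hY]

def cOp (u v : Fin 3) : Fin 3 := ⟨min (u.1 + v.1) 2, by omega⟩

noncomputable def cS {L : Type} (p : L → Prop) (l : L) : Fin 3 := if p l then 1 else 0

theorem fold_count {L : Type} (p : L → Prop) (σ : ℕ → L) {a b : ℕ} {h : Hedge} (hw : Wf a h b) :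
    ((Rc.ofOp (0 : Fin 3) cOp (cS p)).fold σ h).1 =
      min ((Finset.Ico a b).filter (fun i => p (σ i))).card 2 := by
  rw [Rc.fold_ofOp 0 cOp (cS p) σ
    (fun a b => ⟨min ((Finset.Ico a b).filter (fun i => p (σ i))).card 2, by omega⟩) _ _ _ hw]
  · intro a; simp
  · intro a b c hab hbc
    apply Fin.ext
    have : (Finset.Ico a c) = Finset.Ico a b ∪ Finset.Ico b c := by
      rw [Finset.Ico_union_Ico_eq_Ico hab hbc]
    simp only [cOp]
    rw [this, Finset.filter_union, Finset.card_union_of_disjoint]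
    · omega
    · apply Finset.disjoint_filter_filter
      exact Finset.Ico_disjoint_Ico_consecutive a b c
  · intro i
    apply Fin.ext
    simp only [cS, Nat.Ico_succ_singleton, Finset.filter_singleton]
    split_ifs <;> simp

theorem Recog.sumF {A : Type} [AddCommMonoid A]
    (hA : ∀ a : A, (Set.range fun c : ℕ => c • a).Finite)
    {F : NestedWord Δ → (ℕ → ℕ) → (ℕ → Finset ℕ) → A} (hF : Recog F) (x : ℕ) :
    Recog (fun nw γ1 γ2 => ∑ i ∈ Finset.Icc 1 nw.len, F nw (Function.update γ1 x i) γ2) := by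
  obtain ⟨M, hM, R, out, h⟩ := hF
  have := Fintype.ofFinite M
  obtain ⟨M', hM', R', out', h'⟩ := exists_sum_rec
    (R.prod (Rc.ofOp (0 : Fin 3) cOp (cS (fun l : Lb Δ => l.2.1 x))))
    (fun l p => (l.1, Function.update l.2.1 x p, l.2.2))
    (fun m => if m.2.1 = 1 then out m.1 else 0) (fun m => hA _)
  refine ⟨M', hM', R', out', ?_⟩
  intro nw γ1 γ2 hd h1 h2 h3
  rw [← h' _ _ _ _ h2]
  have e : Finset.Ico 1 (nw.len + 1) = Finset.Icc 1 nw.len := by ext; simp [Nat.lt_succ_iff]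
  have key : ∀ T ∈ (Finset.Ico 1 (nw.len + 1)).powerset,
      (fun m : M × Fin 3 => if m.2.1 = 1 then out m.1 else 0)
        ((R.prod (Rc.ofOp (0 : Fin 3) cOp (cS (fun l : Lb Δ => l.2.1 x)))).fold
        (fun i => ((enc nw γ1 γ2 i).1, Function.update (enc nw γ1 γ2 i).2.1 x (i ∈ T),
          (enc nw γ1 γ2 i).2.2)) hd) =
      if T.card = 1 then out (R.fold (fun i => ((enc nw γ1 γ2 i).1,
        Function.update (enc nw γ1 γ2 i).2.1 x (i ∈ T), (enc nw γ1 γ2 i).2.2)) hd) else 0 := by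
    intro T hT
    rw [Finset.mem_powerset] at hT
    rw [Rc.fold_prod]
    simp only
    rw [fold_count _ _ h2]
    simp only [Function.update_self]
    rw [Finset.filter_mem_eq_inter, Finset.inter_eq_right.2 hT]
    congr 1
    apply propext
    omega
  rw [Finset.sum_congr rfl key, ← Finset.sum_filter, ← Finset.powersetCard_eq_filter,
    Finset.powersetCard_one, Finset.sum_map, e]
  refine Finset.sum_congr rfl fun i hi => ?_
  rw [h nw _ γ2 hd _ h2 h3]
  · congr 2
    funext k
    refine Prod.ext rfl (Prod.ext ?_ rfl)
    funext y
    by_cases hy : y = x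
    · subst hy; simp [enc, eq_comm]
    · simp [enc, hy]
  · intro y
    rw [Finset.mem_Icc] at hi
    by_cases hy : y = x
    · subst hy; simp; omega
    · simp only [Function.update_of_ne hy]; exact h1 y

theorem sem_recog (hK : LocallyFiniteSemiring K) (φ : WMSO K Δ) :
    Recog (fun nw γ1 γ2 => φ.sem nw γ1 γ2) := by
  have hA : ∀ a : K, (Set.range fun c : ℕ => c • a).Finite := by
    intro a
    refine (hK {a}).subset ?_
    rintro _ ⟨c, rfl⟩
    exact nsmul_mem (Subsemiring.subset_closure (by simp)) c
  have hM : ∀ a : Additive K, (Set.range fun c : ℕ => c • a).Finite := by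
    intro a
    refine (hK {a.toMul}).subset ?_
    rintro _ ⟨c, rfl⟩
    exact pow_mem (Subsemiring.subset_closure (by simp)) c
  induction φ with
  | const k => exact Recog.const k
  | eqv x y => exact ((Recog.eqv x y).comp (fun p => if p then (1 : K) else 0)).congr (fun _ _ _ _ => by simp only [WMSO.sem]; try congr)
  | lab a x => exact ((Recog.lab a x).comp (fun p => if p then (1 : K) else 0)).congr (fun _ _ _ _ => by simp only [WMSO.sem]; try congr)
  | lev x y => exact ((Recog.lev x y).comp (fun p => if p then (1 : K) else 0)).congr (fun _ _ _ _ => by simp only [WMSO.sem]; try congr)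
  | nuv x y => exact ((Recog.nuv x y).comp (fun p => if p then (1 : K) else 0)).congr (fun _ _ _ _ => by simp only [WMSO.sem]; try congr)
  | mem x y => exact ((Recog.mem x y).comp (fun p => if p then (1 : K) else 0)).congr (fun _ _ _ _ => by simp only [WMSO.sem]; try congr)
  | neq x y => exact ((Recog.eqv x y).comp (fun p => if p then (0 : K) else 1)).congr (fun _ _ _ _ => by simp only [WMSO.sem]; try congr)
  | nlab a x => exact ((Recog.lab a x).comp (fun p => if p then (0 : K) else 1)).congr (fun _ _ _ _ => by simp only [WMSO.sem]; try congr)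
  | nle x y => exact ((Recog.lev x y).comp (fun p => if p then (0 : K) else 1)).congr (fun _ _ _ _ => by simp only [WMSO.sem]; try congr)
  | nnu x y => exact ((Recog.nuv x y).comp (fun p => if p then (0 : K) else 1)).congr (fun _ _ _ _ => by simp only [WMSO.sem]; try congr)
  | nmem x y => exact ((Recog.mem x y).comp (fun p => if p then (0 : K) else 1)).congr (fun _ _ _ _ => by simp only [WMSO.sem]; try congr)
  | or φ ψ ih ih' => exact ih.comp2 ih' (fun a b => a + b)
  | and φ ψ ih ih' => exact ih.comp2 ih' (fun a b => a * b)
  | exF x φ ih => exact ih.sumF hA x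
  | exS X φ ih => exact ih.sumS hA X
  | alF x φ ih => exact Recog.sumF (A := Additive K) hM ih x
  | alS X φ ih => exact Recog.sumS (A := Additive K) hM ih X

/-! ### From recognisers to automata -/

variable [Fintype Δ]

set_option linter.unusedSectionVars false

/-- The deterministic automaton simulating a fold. -/
noncomputable def detA {M : Type} [Fintype M] (R : Rc M Δ) (out : M → K) : WNWA K Δ where
  Q := M × Option Δ
  fintQ := inferInstance
  ι q := if q = (R.m0, none) then 1 else 0
  δcall _ a q' := if q' = (R.m0, some a) then 1 else 0
  δint q a q' := if q' = (R.mint q.1 a, q.2) then 1 else 0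
  δret q p b q' := if ∃ a, q.2 = some a ∧ q' = (R.march p.1 a q.1 b, p.2) then 1 else 0
  κ q := out q.1

/-- `ρ` is locally a run of `detA`. -/
def IsRun {M : Type} (R : Rc M Δ) (nw : NestedWord Δ) (ρ : ℕ → M × Option Δ) (j : ℕ) : Prop :=
  (nw.IsCall j → ρ j = (R.m0, some (nw.letter j))) ∧
  (¬ nw.IsCall j → ¬ nw.IsReturn j → ρ j = (R.mint (ρ (j - 1)).1 (nw.letter j), (ρ (j - 1)).2)) ∧
  (∀ i, nw.rel i j → ∃ a, (ρ (j - 1)).2 = some a ∧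
    ρ j = (R.march (ρ (i - 1)).1 a (ρ (j - 1)).1 (nw.letter j), (ρ (i - 1)).2))

theorem not_call_of_rel {Δ : Type} {nw : NestedWord Δ} {i j : ℕ} (h : nw.rel i j) : ¬ nw.IsCall j := by
  rintro ⟨k, hk⟩
  obtain ⟨p1, p2, p3, p4⟩ := nw.isNest
  have h1 := p1 _ _ h
  have h2 := p1 _ _ hk
  have h3 := p4 _ _ _ _ h hk
  omega

theorem posWeight_detA {M : Type} [Fintype M] (R : Rc M Δ) (out : M → K) (nw : NestedWord Δ)
    (ρ : ℕ → M × Option Δ) (j : ℕ) :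
    (detA R out).posWeight nw ρ j = if IsRun R nw ρ j then 1 else 0 := by
  obtain ⟨p1, p2, p3, p4⟩ := nw.isNest
  unfold WNWA.posWeight
  by_cases hc : nw.IsCall j
  · rw [if_pos hc]
    have : IsRun R nw ρ j ↔ ρ j = (R.m0, some (nw.letter j)) := by
      constructor
      · intro h; exact h.1 hc
      · intro h
        refine ⟨fun _ => h, fun h => absurd hc h, fun i hi => absurd hc (not_call_of_rel hi)⟩
    simp only [detA, this]
  · rw [if_neg hc]
    by_cases hr : nw.IsReturn j
    · rw [dif_pos hr]
      have hs := hr.choose_spec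
      generalize hr.choose = i at hs
      have : IsRun R nw ρ j ↔ ∃ a, (ρ (j - 1)).2 = some a ∧
          ρ j = (R.march (ρ (i - 1)).1 a (ρ (j - 1)).1 (nw.letter j), (ρ (i - 1)).2) := by
        constructor
        · intro h; exact h.2.2 i hs
        · intro h
          refine ⟨fun h => absurd h hc, fun _ h => absurd hr h, fun i' hi' => ?_⟩
          rw [p3 _ _ _ hi' hs]; exact h
      simp only [detA, this]
    · rw [dif_neg hr]
      have : IsRun R nw ρ j ↔ ρ j = (R.mint (ρ (j - 1)).1 (nw.letter j), (ρ (j - 1)).2) := by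
        constructor
        · intro h; exact h.2.1 hc hr
        · intro h
          exact ⟨fun h => absurd h hc, fun _ _ => h, fun i hi => absurd ⟨i, hi⟩ hr⟩
      simp only [detA, this]

theorem run_seg {M : Type} (R : Rc M Δ) (nw : NestedWord Δ) (ρ : ℕ → M × Option Δ) (h : Hedge) :
    ∀ (a b : ℕ) (e : Option Δ), 1 ≤ a → Wf a h b → Good nw h →
    (∀ j, a ≤ j → j < b → IsRun R nw ρ j) → ρ (a - 1) = (R.m0, e) →
    ρ (b - 1) = (R.fold nw.letter h, e) := by
  induction h with
  | nil => intro a b e _ hw _ _ h0; cases hw; exact h0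
  | int h i ih =>
    intro a b e ha hw hg hr h0
    obtain ⟨hw, rfl⟩ := hw
    obtain ⟨hg, hc, hret⟩ := hg
    have hle := hw.le
    have h1 := ih a i e ha hw hg (fun j hj hj' => hr j hj (by omega)) h0
    have h2 := (hr i hle (by omega)).2.1 hc hret
    simpa [h1, Rc.fold] using h2
  | arch h i h1 j ih ih1 =>
    intro a b e ha hw hg hr h0
    obtain ⟨hw, hw1, rfl⟩ := hw
    obtain ⟨hg, hg1, hrel⟩ := hg
    have hle := hw.le
    have hle1 := hw1.le
    have e1 := ih a i e ha hw hg (fun j hj hj' => hr j hj (by omega)) h0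
    have e2 := (hr i hle (by omega)).1 ⟨j, hrel⟩
    have e3 := ih1 (i + 1) j (some (nw.letter i)) (by omega) hw1 hg1
      (fun j hj hj' => hr j (by omega) (by omega)) (by simpa using e2)
    obtain ⟨c, e4, e5⟩ := (hr j (by omega) (by omega)).2.2 i hrel
    rw [e3] at e4 e5
    rw [e1] at e5
    obtain rfl : nw.letter i = c := by simpa using e4
    simpa [Rc.fold] using e5

/-- There is a sequence following the deterministic transitions; values on return positions
always carry a letter. -/
noncomputable def detRun {M : Type} (R : Rc M Δ) (nw : NestedWord Δ) : ℕ → M × Option Δ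
  | 0 => (R.m0, none)
  | j + 1 =>
    if nw.IsCall (j + 1) then (R.m0, some (nw.letter (j + 1)))
    else if h : ∃ i : Fin (j + 2), nw.rel i (j + 1) then
      (R.march (detRun R nw (h.choose.1 - 1)).1
        ((detRun R nw j).2.getD (nw.letter (j + 1)))
        (detRun R nw j).1 (nw.letter (j + 1)), (detRun R nw (h.choose.1 - 1)).2)
    else (R.mint (detRun R nw j).1 (nw.letter (j + 1)), (detRun R nw j).2)
termination_by j => j
decreasing_by all_goals omega

/-- The weak version of `IsRun` satisfied by construction. -/
def IsRun' {M : Type} (R : Rc M Δ) (nw : NestedWord Δ) (ρ : ℕ → M × Option Δ) (j : ℕ) : Prop :=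
  (nw.IsCall j → ρ j = (R.m0, some (nw.letter j))) ∧
  (¬ nw.IsCall j → ¬ nw.IsReturn j → ρ j = (R.mint (ρ (j - 1)).1 (nw.letter j), (ρ (j - 1)).2)) ∧
  (∀ i, nw.rel i j →
    ρ j = (R.march (ρ (i - 1)).1 ((ρ (j - 1)).2.getD (nw.letter j)) (ρ (j - 1)).1 (nw.letter j),
      (ρ (i - 1)).2))

theorem detRun_isRun' {M : Type} (R : Rc M Δ) (nw : NestedWord Δ) (j : ℕ) :
    IsRun' R nw (detRun R nw) (j + 1) := by
  obtain ⟨p1, p2, p3, p4⟩ := nw.isNest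
  refine ⟨?_, ?_, ?_⟩
  · intro h
    rw [detRun, if_pos h]
  · intro h h'
    rw [detRun, if_neg h, dif_neg]
    · rfl
    · rintro ⟨i, hi⟩; exact h' ⟨i, hi⟩
  · intro i hi
    have hl := p1 _ _ hi
    have hex : ∃ i : Fin (j + 2), nw.rel i (j + 1) := ⟨⟨i, by omega⟩, hi⟩
    rw [detRun, if_neg (not_call_of_rel hi), dif_pos hex]
    have := p3 _ _ _ hex.choose_spec hi
    rw [this]
    rfl

theorem run_seg' {M : Type} (R : Rc M Δ) (nw : NestedWord Δ) (ρ : ℕ → M × Option Δ) (h : Hedge) :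
    ∀ (a b : ℕ) (e : Option Δ), 1 ≤ a → Wf a h b → Good nw h →
    (∀ j, a ≤ j → j < b → IsRun' R nw ρ j) → ρ (a - 1) = (R.m0, e) →
    (ρ (b - 1)).2 = e ∧ ∀ j, a ≤ j → j < b → IsRun R nw ρ j := by
  obtain ⟨p1, p2, p3, p4⟩ := nw.isNest
  induction h with
  | nil => intro a b e _ hw _ _ h0; cases hw; exact ⟨by rw [h0], fun j h h' => by omega⟩
  | int h i ih =>
    intro a b e ha hw hg hr h0
    obtain ⟨hw, rfl⟩ := hw
    obtain ⟨hg, hc, hret⟩ := hg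
    have hle := hw.le
    have h1 := ih a i e ha hw hg (fun j hj hj' => hr j hj (by omega)) h0
    have h2 := (hr i hle (by omega)).2.1 hc hret
    refine ⟨by simp [h2, h1.1], fun j hj hj' => ?_⟩
    rcases Nat.lt_or_ge j i with hji | hji
    · exact h1.2 j hj hji
    · obtain rfl : j = i := by omega
      exact ⟨fun h => absurd h hc, fun _ _ => h2, fun k hk => absurd ⟨k, hk⟩ hret⟩
  | arch h i h1 j ih ih1 =>
    intro a b e ha hw hg hr h0
    obtain ⟨hw, hw1, rfl⟩ := hw
    obtain ⟨hg, hg1, hrel⟩ := hg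
    have hle := hw.le
    have hle1 := hw1.le
    have e1 := ih a i e ha hw hg (fun j hj hj' => hr j hj (by omega)) h0
    have e2 := (hr i hle (by omega)).1 ⟨j, hrel⟩
    have e3 := ih1 (i + 1) j (some (nw.letter i)) (by omega) hw1 hg1
      (fun j hj hj' => hr j (by omega) (by omega)) (by simpa using e2)
    have e5 := (hr j (by omega) (by omega)).2.2 i hrel
    rw [e3.1] at e5
    refine ⟨by simp [e5, e1.1], fun k hk hk' => ?_⟩
    rcases Nat.lt_or_ge k i with hki | hki
    · exact e1.2 k hk hki
    · rcases Nat.eq_or_lt_of_le hki with rfl | hki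
      · exact ⟨fun _ => e2, fun h => absurd ⟨j, hrel⟩ h,
          fun l hl => absurd ⟨j, hrel⟩ (not_call_of_rel hl)⟩
      · rcases Nat.lt_or_ge k j with hkj | hkj
        · exact e3.2 k hki hkj
        · obtain rfl : k = j := by omega
          refine ⟨fun h => absurd h (not_call_of_rel hrel), fun _ h => absurd ⟨i, hrel⟩ h,
            fun l hl => ?_⟩
          obtain rfl := p3 _ _ _ hl hrel
          exact ⟨nw.letter l, e3.1, by simpa using e5⟩

/-- Two runs with the same start agree. -/
theorem run_unique {M : Type} (R : Rc M Δ) (nw : NestedWord Δ) (ρ τ : ℕ → M × Option Δ) (n : ℕ)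
    (h0 : ρ 0 = τ 0) (hρ : ∀ j, 1 ≤ j → j ≤ n → IsRun R nw ρ j)
    (hτ : ∀ j, 1 ≤ j → j ≤ n → IsRun R nw τ j) : ∀ j, j ≤ n → ρ j = τ j := by
  obtain ⟨p1, p2, p3, p4⟩ := nw.isNest
  intro j
  induction j using Nat.strong_induction_on with
  | _ j ih =>
  intro hj
  rcases Nat.eq_zero_or_pos j with rfl | hpos
  · exact h0
  have a1 := hρ j hpos hj
  have a2 := hτ j hpos hj
  have e := ih (j - 1) (by omega) (by omega)
  by_cases hc : nw.IsCall j
  · rw [a1.1 hc, a2.1 hc]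
  by_cases hr : nw.IsReturn j
  · obtain ⟨i, hi⟩ := hr
    have hl := p1 _ _ hi
    obtain ⟨c, b1, b2⟩ := a1.2.2 i hi
    obtain ⟨c', b1', b2'⟩ := a2.2.2 i hi
    rw [← e, b1] at b1'
    obtain rfl : c = c' := by simpa using b1'
    rw [b2, b2', e, ih (i - 1) (by omega) (by omega)]
  · rw [a1.2.1 hc hr, a2.2.1 hc hr, e]

theorem behavior_detA_aux {M : Type} [Fintype M] (R : Rc M Δ) (out : M → K) (nw : NestedWord Δ) :
    (detA R out).behavior nw = ∑ r : Fin (nw.len + 1) → M × Option Δ,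
      (if r 0 = (R.m0, none) then 1 else 0) *
      (∏ j ∈ Finset.Icc 1 nw.len, if IsRun R nw (clampFun r) j then 1 else 0) *
      out (r (Fin.last _)).1 := by
  unfold WNWA.behavior WNWA.runWeight
  refine Fintype.sum_congr _ _ fun r => ?_
  have : ∀ j, (detA R out).posWeight nw (clampFun r) j =
    if IsRun R nw (clampFun r) j then 1 else 0 := posWeight_detA R out nw (clampFun r)
  simp only [this]
  rfl

theorem behavior_detA {M : Type} [Fintype M] (R : Rc M Δ) (out : M → K) (nw : NestedWord Δ)
    (h : Hedge) (hw : Wf 1 h (nw.len + 1)) (hg : Good nw h) :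
    (detA R out).behavior nw = out (R.fold nw.letter h) := by
  have hrun := (run_seg' R nw (detRun R nw) h 1 (nw.len + 1) none le_rfl hw hg (by
    intro j hj _
    obtain ⟨k, rfl⟩ : ∃ k, j = k + 1 := ⟨j - 1, by omega⟩
    exact detRun_isRun' R nw k) (by rw [detRun])).2
  have hend := run_seg R nw (detRun R nw) h 1 (nw.len + 1) none le_rfl hw hg hrun (by rw [detRun])
  let r0 : Fin (nw.len + 1) → M × Option Δ := fun k => detRun R nw k
  have hcl : ∀ k, k ≤ nw.len → clampFun r0 k = detRun R nw k := by
    intro k hk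
    simp [clampFun, r0, hk]
  have hcongr : ∀ ρ τ : ℕ → M × Option Δ, (∀ k, k ≤ nw.len → ρ k = τ k) → ∀ j, 1 ≤ j → j ≤ nw.len →
      IsRun R nw ρ j → IsRun R nw τ j := by
    intro ρ τ he j hj hj' hR
    refine ⟨fun h => by rw [← he j hj', hR.1 h], fun h h' => by
      rw [← he j hj', ← he (j - 1) (by omega), hR.2.1 h h'], fun i hi => ?_⟩
    have hl := nw.isNest.1 _ _ hi
    rw [← he j hj', ← he (j - 1) (by omega), ← he (i - 1) (by omega)]
    exact hR.2.2 i hi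
  rw [behavior_detA_aux, Finset.sum_eq_single r0]
  · have h1 : (∏ j ∈ Finset.Icc 1 nw.len, if IsRun R nw (clampFun r0) j then (1 : K) else 0) = 1 := by
      refine Finset.prod_eq_one fun j hj => ?_
      rw [Finset.mem_Icc] at hj
      rw [if_pos]
      exact hcongr (detRun R nw) _ (fun k hk => (hcl k hk).symm) j hj.1 hj.2
        (hrun j hj.1 (by omega))
    rw [h1]
    have h2 : r0 0 = (R.m0, none) := by simp [r0, detRun]
    have h3 : r0 (Fin.last _) = (R.fold nw.letter h, none) := by
      simpa [r0] using hend
    rw [h2, h3]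
    simp
  · intro r _ hne
    by_cases hi : r 0 = (R.m0, none)
    · have : (∏ j ∈ Finset.Icc 1 nw.len, if IsRun R nw (clampFun r) j then (1 : K) else 0) = 0 := by
        by_contra hnz
        apply hne
        have hR : ∀ j, 1 ≤ j → j ≤ nw.len → IsRun R nw (clampFun r) j := by
          intro j hj hj'
          by_contra hcon
          apply hnz
          refine Finset.prod_eq_zero (Finset.mem_Icc.2 ⟨hj, hj'⟩) ?_
          rw [if_neg hcon]
        have := run_unique R nw (clampFun r) (detRun R nw) nw.len
          (by rw [detRun, ← hi]; simp [clampFun]) hR (fun j hj hj' => hrun j hj (by omega))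
        funext k
        have := this k.1 (by omega)
        have hk : min k.1 nw.len = k.1 := by omega
        simpa [clampFun, r0, hk] using this
      rw [this]; simp
    · rw [if_neg hi]; simp
  · intro h; exact absurd (Finset.mem_univ _) h

/-- Relabel a recogniser over encoded letters: the first position is marked by all
first-order variables, and no position belongs to a set variable. -/
def markFirst {M : Type} (R : Rc M (Lb Δ)) : Rc (Prop × M × M) Δ where
  m0 := (True, R.m0, R.m0)
  mint v l := (False, R.mint v.2.1 (l, fun _ => False, fun _ => False),
    R.mint v.2.2 (l, fun _ => v.1, fun _ => False))
  march v l w l' := (False,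
    R.march v.2.1 (l, fun _ => False, fun _ => False) w.2.1 (l', fun _ => False, fun _ => False),
    R.march v.2.2 (l, fun _ => v.1, fun _ => False) w.2.1 (l', fun _ => False, fun _ => False))

theorem fold_markFirst {M : Type} (R : Rc M (Lb Δ)) (σ : ℕ → Δ) (h : Hedge) :
    ∀ a b, Wf a h b → (markFirst R).fold σ h =
      (a = b, R.fold (fun i => (σ i, fun _ => False, fun _ => False)) h,
        R.fold (fun i => (σ i, fun _ => a = i, fun _ => False)) h) := by
  induction h with
  | nil => intro a b hw; cases hw; simp [Rc.fold, markFirst]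
  | int h i ih =>
    intro a b hw
    obtain ⟨hw, rfl⟩ := hw
    have hle := hw.le
    simp only [Rc.fold, ih a i hw]
    have : ¬ a = i + 1 := by omega
    simp [markFirst, this]
  | arch h i h1 j ih ih1 =>
    intro a b hw
    obtain ⟨hw, hw1, rfl⟩ := hw
    have hle := hw.le
    have hle1 := hw1.le
    simp only [Rc.fold, ih a i hw, ih1 _ j hw1]
    have e1 : ¬ a = j + 1 := by omega
    have e2 : ¬ a = j := by omega
    have e3 : R.fold (fun i => (σ i, fun _ => a = i, fun _ => False)) h1 =
        R.fold (fun i => (σ i, fun _ => False, fun _ => False)) h1 := by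
      refine R.fold_congr hw1 ?_
      intro k hk hk'
      have : ¬ a = k := by omega
      simp [this]
    simp [markFirst, e1, e2, e3]

theorem regular_of_definable (hK : LocallyFiniteSemiring K) (S : NestedWord Δ → K)
    (hS : NWDefinable (fun _ => True) S) : NWRegular S := by
  obtain ⟨φ, -, -, hφ⟩ := hS
  obtain ⟨M, hM, R, out, h⟩ := sem_recog hK φ
  beta_reduce at h
  have := Fintype.ofFinite (Prop × M × M)
  refine ⟨detA (markFirst R) (fun v => out v.2.2), fun nw => ?_⟩
  obtain ⟨hd, hw, hg, hA⟩ := exists_hedge nw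
  rw [behavior_detA _ _ nw hd hw hg, ← hφ nw (fun _ => 1) (fun _ => ∅), h _ _ _ hd _ hw hA,
    fold_markFirst R nw.letter hd _ _ hw]
  · have e : enc nw (fun _ => 1) (fun _ => ∅) =
        fun i => (nw.letter i, fun _ => 1 = i, fun _ => False) := by
      funext i
      simp [enc]
    rw [e]
  · intro x
    have : 0 < nw.len := List.length_pos_of_ne_nil nw.ne
    omega

end Logic

section Back

open Finset WMSO
set_option linter.unusedSectionVars false

variable {K Δ : Type} [CommSemiring K]

open Classical in
/-- The characteristic value of a proposition. -/
noncomputable def ind (p : Prop) : K := if p then 1 else 0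

theorem ind_congr {p q : Prop} (h : p ↔ q) : (ind p : K) = ind q := by rw [propext h]

@[simp] theorem ind_true : (ind True : K) = 1 := by simp [ind]
@[simp] theorem ind_false : (ind False : K) = 0 := by simp [ind]

theorem ind_mul (p q : Prop) : (ind p * ind q : K) = ind (p ∧ q) := by
  by_cases hp : p <;> by_cases hq : q <;> simp [hp, hq]

theorem ind_add (p q : Prop) (h : ¬ (p ∧ q)) : (ind p + ind q : K) = ind (p ∨ q) := by
  by_cases hp : p <;> by_cases hq : q <;> simp_all

theorem prod_ind {α : Type} (s : Finset α) (p : α → Prop) :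
    (∏ i ∈ s, ind (p i) : K) = ind (∀ i ∈ s, p i) := by
  classical
  induction s using Finset.induction_on with
  | empty => simp
  | insert a s ha ih => rw [prod_insert ha, ih, ind_mul]; simp

/-- If at most one index satisfies the predicate then the sum is an indicator. -/
theorem sum_ind {α : Type} (s : Finset α) (p : α → Prop)
    (h : ∀ i ∈ s, ∀ j ∈ s, p i → p j → i = j) :
    (∑ i ∈ s, ind (p i) : K) = ind (∃ i ∈ s, p i) := by
  classical
  by_cases he : ∃ i ∈ s, p i
  · obtain ⟨i, hi, hp⟩ := he
    rw [sum_eq_single_of_mem i hi]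
    · have : ∃ i ∈ s, p i := ⟨i, hi, hp⟩
      simp [hp, this]
    · intro j hj hji
      have : ¬ p j := fun hpj => hji (h j hj i hi hpj hp)
      simp [this]
  · rw [sum_eq_zero]
    · simp [he]
    · intro i hi
      have : ¬ p i := fun hp => he ⟨i, hi, hp⟩
      simp [this]

section Sem
variable (nw : NestedWord Δ) (g : ℕ → ℕ) (G : ℕ → Finset ℕ)

theorem sem_lab (a : Δ) (x : ℕ) : (lab a x : WMSO K Δ).sem nw g G = ind (nw.letter (g x) = a) := by
  simp [sem, ind]
theorem sem_lev (x y : ℕ) : (lev x y : WMSO K Δ).sem nw g G = ind (g x ≤ g y) := by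
  simp [sem, ind]
theorem sem_nuv (x y : ℕ) : (nuv x y : WMSO K Δ).sem nw g G = ind (nw.rel (g x) (g y)) := by
  simp [sem, ind]
theorem sem_mem (x y : ℕ) : (mem x y : WMSO K Δ).sem nw g G = ind (g x ∈ G y) := by
  simp [sem, ind]
theorem sem_nle (x y : ℕ) : (nle x y : WMSO K Δ).sem nw g G = ind (¬ g x ≤ g y) := by
  by_cases h : g x ≤ g y <;> simp [sem, ind, h]
theorem sem_nnu (x y : ℕ) : (nnu x y : WMSO K Δ).sem nw g G = ind (¬ nw.rel (g x) (g y)) := by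
  by_cases h : nw.rel (g x) (g y) <;> simp [sem, ind, h]
theorem sem_nmem (x y : ℕ) : (nmem x y : WMSO K Δ).sem nw g G = ind (¬ g x ∈ G y) := by
  by_cases h : g x ∈ G y <;> simp [sem, ind, h]
theorem sem_const (k : K) : (const k : WMSO K Δ).sem nw g G = k := by simp [sem]
theorem sem_or (φ ψ : WMSO K Δ) :
    (or φ ψ).sem nw g G = φ.sem nw g G + ψ.sem nw g G := by simp [sem]
theorem sem_and (φ ψ : WMSO K Δ) :
    (and φ ψ).sem nw g G = φ.sem nw g G * ψ.sem nw g G := by simp [sem]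
theorem sem_exF (x : ℕ) (φ : WMSO K Δ) : (exF x φ).sem nw g G =
    ∑ i ∈ Icc 1 nw.len, φ.sem nw (Function.update g x i) G := by
  simp [sem]
theorem sem_alF (x : ℕ) (φ : WMSO K Δ) : (alF x φ).sem nw g G =
    ∏ i ∈ Icc 1 nw.len, φ.sem nw (Function.update g x i) G := by
  simp [sem]
theorem sem_exS (x : ℕ) (φ : WMSO K Δ) : (exS x φ).sem nw g G =
    ∑ T ∈ (Icc 1 nw.len).powerset, φ.sem nw g (Function.update G x T) := by
  simp [sem]

end Sem

/-- Finite disjunction over a list. -/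
def orL : List (WMSO K Δ) → WMSO K Δ
  | [] => const 0
  | φ :: l => or φ (orL l)

/-- Finite conjunction over a list. -/
def andL : List (WMSO K Δ) → WMSO K Δ
  | [] => const 1
  | φ :: l => and φ (andL l)

noncomputable def bigOr {α : Type} (s : Finset α) (f : α → WMSO K Δ) : WMSO K Δ :=
  orL (s.toList.map f)

noncomputable def bigAnd {α : Type} (s : Finset α) (f : α → WMSO K Δ) : WMSO K Δ :=
  andL (s.toList.map f)

theorem sem_bigOr (nw : NestedWord Δ) (g : ℕ → ℕ) (G : ℕ → Finset ℕ) {α : Type} (s : Finset α)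
    (f : α → WMSO K Δ) : (bigOr s f).sem nw g G = ∑ a ∈ s, (f a).sem nw g G := by
  have : ∀ l : List (WMSO K Δ), (orL l).sem nw g G = (l.map fun φ => φ.sem nw g G).sum := by
    intro l
    induction l with
    | nil => simp [orL, sem_const]
    | cons φ l ih => simp [orL, sem_or, ih]
  rw [bigOr, this, List.map_map, ← Finset.sum_map_toList]
  rfl

theorem sem_bigAnd (nw : NestedWord Δ) (g : ℕ → ℕ) (G : ℕ → Finset ℕ) {α : Type} (s : Finset α)
    (f : α → WMSO K Δ) : (bigAnd s f).sem nw g G = ∏ a ∈ s, (f a).sem nw g G := by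
  have : ∀ l : List (WMSO K Δ), (andL l).sem nw g G = (l.map fun φ => φ.sem nw g G).prod := by
    intro l
    induction l with
    | nil => simp [andL, sem_const]
    | cons φ l ih => simp [andL, sem_and, ih]
  rw [bigAnd, this, List.map_map, ← Finset.prod_map_toList]
  rfl

theorem mem_freeF_bigOr {α : Type} (s : Finset α) (f : α → WMSO K Δ) (x : ℕ) :
    x ∈ (bigOr s f).freeF ↔ ∃ a ∈ s, x ∈ (f a).freeF := by
  have : ∀ l : List (WMSO K Δ), x ∈ (orL l).freeF ↔ ∃ φ ∈ l, x ∈ φ.freeF := by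
    intro l
    induction l with
    | nil => simp [orL, freeF]
    | cons φ l ih => simp [orL, freeF, ih]
  simp [bigOr, this]

theorem mem_freeS_bigOr {α : Type} (s : Finset α) (f : α → WMSO K Δ) (x : ℕ) :
    x ∈ (bigOr s f).freeS ↔ ∃ a ∈ s, x ∈ (f a).freeS := by
  have : ∀ l : List (WMSO K Δ), x ∈ (orL l).freeS ↔ ∃ φ ∈ l, x ∈ φ.freeS := by
    intro l
    induction l with
    | nil => simp [orL, freeS]
    | cons φ l ih => simp [orL, freeS, ih]
  simp [bigOr, this]

theorem mem_freeF_bigAnd {α : Type} (s : Finset α) (f : α → WMSO K Δ) (x : ℕ) :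
    x ∈ (bigAnd s f).freeF ↔ ∃ a ∈ s, x ∈ (f a).freeF := by
  have : ∀ l : List (WMSO K Δ), x ∈ (andL l).freeF ↔ ∃ φ ∈ l, x ∈ φ.freeF := by
    intro l
    induction l with
    | nil => simp [andL, freeF]
    | cons φ l ih => simp [andL, freeF, ih]
  simp [bigAnd, this]

theorem mem_freeS_bigAnd {α : Type} (s : Finset α) (f : α → WMSO K Δ) (x : ℕ) :
    x ∈ (bigAnd s f).freeS ↔ ∃ a ∈ s, x ∈ (f a).freeS := by
  have : ∀ l : List (WMSO K Δ), x ∈ (andL l).freeS ↔ ∃ φ ∈ l, x ∈ φ.freeS := by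
    intro l
    induction l with
    | nil => simp [andL, freeS]
    | cons φ l ih => simp [andL, freeS, ih]
  simp [bigAnd, this]

/-- Existential quantification of the set variables `0, …, m-1`. -/
def exSs : ℕ → WMSO K Δ → WMSO K Δ
  | 0, φ => φ
  | m + 1, φ => exSs m (exS m φ)

/-- Override the first `m` set variables. -/
def ovr {m : ℕ} (T : Fin m → Finset ℕ) (G : ℕ → Finset ℕ) : ℕ → Finset ℕ :=
  fun k => if h : k < m then T ⟨k, h⟩ else G k

theorem freeF_exSs (m : ℕ) (φ : WMSO K Δ) : (exSs m φ).freeF = φ.freeF := by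
  induction m generalizing φ with
  | zero => rfl
  | succ m ih => rw [exSs, ih]; rfl

theorem mem_freeS_exSs (m : ℕ) (φ : WMSO K Δ) (x : ℕ) :
    x ∈ (exSs m φ).freeS ↔ x ∈ φ.freeS ∧ m ≤ x := by
  induction m generalizing φ with
  | zero => simp [exSs]
  | succ m ih =>
    rw [exSs, ih]
    simp only [freeS, mem_erase]
    constructor
    · rintro ⟨⟨h1, h2⟩, h3⟩; exact ⟨h2, by omega⟩
    · rintro ⟨h1, h2⟩; exact ⟨⟨by omega, h1⟩, by omega⟩

theorem sem_exSs (nw : NestedWord Δ) (g : ℕ → ℕ) (m : ℕ) (φ : WMSO K Δ) (G : ℕ → Finset ℕ) :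
    (exSs m φ).sem nw g G =
      ∑ T ∈ Fintype.piFinset (fun _ : Fin m => (Icc 1 nw.len).powerset),
        φ.sem nw g (ovr T G) := by
  induction m generalizing φ with
  | zero =>
    have : ∀ T : Fin 0 → Finset ℕ, ovr T G = G := by intro T; funext k; simp [ovr]
    simp [exSs, this]
  | succ m ih =>
    rw [exSs, ih]
    simp only [sem_exS]
    rw [← sum_product']
    refine sum_nbij' (fun p => Fin.snoc p.1 p.2) (fun T => (Fin.init T, T (Fin.last m)))
      ?_ ?_ ?_ ?_ ?_
    · rintro ⟨T, t⟩ h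
      simp only [mem_product, Fintype.mem_piFinset] at h ⊢
      intro k
      refine Fin.lastCases ?_ (fun k => ?_) k
      · simpa using h.2
      · simpa using h.1 k
    · intro T h
      simp only [mem_product, Fintype.mem_piFinset] at h ⊢
      exact ⟨fun k => h _, h _⟩
    · rintro ⟨T, t⟩ h
      simp
    · intro T h
      simp
    · rintro ⟨T, t⟩ h
      congr 1
      funext k
      by_cases hk : k = m
      · subst hk
        simp [ovr, Fin.snoc]
      · by_cases hk2 : k < m
        · have : k < m + 1 := by omega
          simp [ovr, Fin.snoc, Function.update, hk, hk2, this]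
        · have : ¬ k < m + 1 := by omega
          simp [ovr, Function.update, hk, hk2, this]

end Back

section Auto

open Finset WMSO
set_option linter.unusedSectionVars false

variable {K Δ : Type} [CommSemiring K] [Fintype Δ] {Q : Type} [Fintype Q] {m : ℕ}

open Classical in
/-- Position `x` carries exactly the state `q`. -/
noncomputable def fSt (e : Q → ℕ) (q : Q) (x : ℕ) : WMSO K Δ :=
  bigAnd univ (fun q' => if q' = q then mem x (e q') else nmem x (e q'))

/-- `x` is the first position. -/
def fFirst (x : ℕ) : WMSO K Δ := alF 3 (lev x 3)

/-- `y` is the predecessor of `x`. -/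
def fPred (y x : ℕ) : WMSO K Δ :=
  and (nle x y) (alF 3 (or (lev 3 y) (and (nle 3 y) (lev x 3))))

open Classical in
/-- The state before position `x` is `p`. -/
noncomputable def fPrev (e : Q → ℕ) (q0 p : Q) (x : ℕ) : WMSO K Δ :=
  or (if q0 = p then fFirst x else const 0) (exF 2 (and (fPred 2 x) (fSt e p 2)))

noncomputable def fRet (e : Q → ℕ) (q0 p : Q) : WMSO K Δ :=
  exF 1 (and (nuv 1 0) (fPrev e q0 p 1))

def fCall : WMSO K Δ := exF 1 (nuv 0 1)

def fInt : WMSO K Δ := and (alF 1 (nnu 0 1)) (alF 1 (nnu 1 0))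

noncomputable def fW (A : WNWA K Δ) (e : A.Q → ℕ) (q0 : A.Q) : WMSO K Δ :=
  bigOr univ fun t : A.Q × Δ × A.Q =>
    and (fPrev e q0 t.1 0) (and (lab t.2.1 0) (and (fSt e t.2.2 0)
      (or (and fCall (const (A.δcall t.1 t.2.1 t.2.2)))
      (or (and fInt (const (A.δint t.1 t.2.1 t.2.2)))
        (bigOr univ fun p => and (fRet e q0 p) (const (A.δret t.1 p t.2.1 t.2.2)))))))

noncomputable def fFinal (e : Q → ℕ) (q : Q) : WMSO K Δ :=
  exF 0 (and (alF 1 (lev 1 0)) (fSt e q 0))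

noncomputable def fAuto (A : WNWA K Δ) (m : ℕ) (e : A.Q → ℕ) : WMSO K Δ :=
  bigOr univ fun q0 => and (const (A.ι q0)) (exSs m
    (and (alF 0 (fW A e q0)) (bigOr univ fun q => and (fFinal e q) (const (A.κ q)))))

theorem freeF_fSt (e : Q → ℕ) (q : Q) (x y : ℕ) (h : y ∈ (fSt e q x : WMSO K Δ).freeF) :
    y = x := by
  simp only [fSt, mem_freeF_bigAnd] at h
  obtain ⟨q', -, h⟩ := h
  split_ifs at h <;> simpa [freeF] using h

theorem freeS_fSt (e : Q → ℕ) (he : ∀ q, e q < m) (q : Q) (x y : ℕ)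
    (h : y ∈ (fSt e q x : WMSO K Δ).freeS) : y < m := by
  simp only [fSt, mem_freeS_bigAnd] at h
  obtain ⟨q', -, h⟩ := h
  split_ifs at h <;> (simp [freeS] at h; rw [h]; exact he _)

theorem freeF_fPrev (e : Q → ℕ) (q p : Q) (x y : ℕ) (h : y ∈ (fPrev e q p x : WMSO K Δ).freeF) :
    y = x := by
  have h2 := freeF_fSt (K := K) (Δ := Δ) e p 2 y
  simp only [fPrev, freeF, mem_union, mem_erase, fPred] at h
  rcases h with h | h
  · split_ifs at h <;> simp [fFirst, freeF] at h
    tauto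
  · simp at h
    tauto

theorem freeS_fPrev (e : Q → ℕ) (he : ∀ q, e q < m) (q p : Q) (x y : ℕ)
    (h : y ∈ (fPrev e q p x : WMSO K Δ).freeS) : y < m := by
  have h2 := freeS_fSt (K := K) (Δ := Δ) e he p 2 y
  simp only [fPrev, freeS, mem_union, fPred] at h
  rcases h with h | h
  · split_ifs at h <;> simp [fFirst, freeS] at h
  · simp at h
    tauto

theorem freeF_fW (A : WNWA K Δ) (e : A.Q → ℕ) (q0 : A.Q) (y : ℕ)
    (h : y ∈ (fW A e q0).freeF) : y = 0 := by
  simp only [fW, mem_freeF_bigOr, freeF, mem_union, fRet, fCall, fInt, mem_erase] at h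
  obtain ⟨t, -, h⟩ := h
  rcases h with h | h | h | h | h | ⟨p, -, h⟩
  · exact freeF_fPrev _ _ _ _ _ h
  · simpa using h
  · exact freeF_fSt _ _ _ _ h
  · simp at h; tauto
  · simp at h; tauto
  · have := freeF_fPrev (K := K) (Δ := Δ) e q0 p 1 y
    simp at h; tauto

theorem freeS_fW (A : WNWA K Δ) (e : A.Q → ℕ) (he : ∀ q, e q < m) (q0 : A.Q) (y : ℕ)
    (h : y ∈ (fW A e q0).freeS) : y < m := by
  simp only [fW, mem_freeS_bigOr, freeS, mem_union, fRet, fCall, fInt] at h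
  obtain ⟨t, -, h⟩ := h
  rcases h with h | h | h | h | h | ⟨p, -, h⟩
  · exact freeS_fPrev _ he _ _ _ _ h
  · simp at h
  · exact freeS_fSt _ he _ _ _ h
  · simp at h
  · simp at h
  · have := freeS_fPrev (K := K) (Δ := Δ) e he q0 p 1 y
    simp at h; tauto

theorem fAuto_sentence (A : WNWA K Δ) (e : A.Q → ℕ) (he : ∀ q, e q < m) :
    (fAuto A m e).Sentence := by
  constructor
  · refine eq_empty_of_forall_notMem fun y h => ?_
    simp only [fAuto, mem_freeF_bigOr, freeF, mem_union, freeF_exSs, mem_erase, fFinal] at h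
    obtain ⟨q0, -, h⟩ := h
    rcases h with h | h | ⟨q, -, h⟩
    · simp at h
    · exact h.1 (freeF_fW _ _ _ _ h.2)
    · have := freeF_fSt (K := K) (Δ := Δ) e q 0 y
      simp at h; tauto
  · refine eq_empty_of_forall_notMem fun y h => ?_
    simp only [fAuto, mem_freeS_bigOr, freeS, mem_union, mem_freeS_exSs, fFinal] at h
    obtain ⟨q0, -, h⟩ := h
    rcases h with h | ⟨h | ⟨q, -, h⟩, h2⟩
    · simp at h
    · have := freeS_fW A e he _ _ h
      omega
    · have := freeS_fSt (K := K) (Δ := Δ) e he q 0 y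
      simp at h
      have := this h
      omega

section Sem

variable (nw : NestedWord Δ) (G : ℕ → Finset ℕ)

theorem sem_fSt (g : ℕ → ℕ) (e : Q → ℕ) (q : Q) (x : ℕ) :
    (fSt e q x : WMSO K Δ).sem nw g G = ind (∀ q', g x ∈ G (e q') ↔ q' = q) := by
  rw [fSt, sem_bigAnd]
  trans ∏ q', ind (g x ∈ G (e q') ↔ q' = q)
  · refine prod_congr rfl fun q' _ => ?_
    split_ifs with h
    · simp [sem_mem, h]
    · simp [sem_nmem, h]
  · rw [prod_ind]; simp

theorem sem_fFirst (g : ℕ → ℕ) (x : ℕ) (hx : x ≠ 3) (h1 : 1 ≤ g x) :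
    (fFirst x : WMSO K Δ).sem nw g G = ind (g x = 1) := by
  have hn : 0 < nw.len := List.length_pos_of_ne_nil nw.ne
  simp only [fFirst, sem_alF, sem_lev, prod_ind]
  refine ind_congr ?_
  simp only [Function.update_self, Function.update_of_ne hx, mem_Icc]
  constructor
  · intro h; have := h 1 ⟨le_rfl, hn⟩; omega
  · intro h i hi; omega

theorem sem_fPred (g : ℕ → ℕ) (y x : ℕ) (hx : x ≠ 3) (hy : y ≠ 3) (h1 : 1 ≤ g x)
    (h2 : g x ≤ nw.len) (h3 : 1 ≤ g y) (h4 : g y ≤ nw.len) :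
    (fPred y x : WMSO K Δ).sem nw g G = ind (g y + 1 = g x) := by
  simp only [fPred, sem_and, sem_alF, sem_or, sem_lev, sem_nle, ind_mul]
  have : ∀ i ∈ Icc 1 nw.len,
      (ind (Function.update g 3 i 3 ≤ Function.update g 3 i y) +
        ind (¬ Function.update g 3 i 3 ≤ Function.update g 3 i y ∧
          Function.update g 3 i x ≤ Function.update g 3 i 3) : K) = ind (i ≤ g y ∨ g x ≤ i) := by
    intro i hi
    simp only [Function.update_self, Function.update_of_ne hx, Function.update_of_ne hy]
    rw [ind_add _ _ (by tauto)]
    exact ind_congr (by tauto)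
  rw [prod_congr rfl this, prod_ind, ind_mul]
  refine ind_congr ?_
  simp only [mem_Icc]
  constructor
  · rintro ⟨h, h'⟩
    have := h' (g y + 1)
    omega
  · intro h
    exact ⟨by omega, fun i hi => by omega⟩

end Sem

end Auto

section AutoSem

open Finset WMSO
set_option linter.unusedSectionVars false

variable {K Δ : Type} [CommSemiring K] [Fintype Δ] {Q : Type} [Fintype Q] {m : ℕ}

/-- The set variables code the state sequence `σ`. -/
def Codes (nw : NestedWord Δ) (G : ℕ → Finset ℕ) (e : Q → ℕ) (σ : ℕ → Q) : Prop :=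
  ∀ x, 1 ≤ x → x ≤ nw.len → ∀ q, (∀ q', x ∈ G (e q') ↔ q' = q) ↔ σ x = q

theorem sem_fPrev {nw : NestedWord Δ} {G : ℕ → Finset ℕ} {e : Q → ℕ} {σ : ℕ → Q}
    (hσ : Codes nw G e σ) (g : ℕ → ℕ) (p : Q) (x : ℕ) (hx : x ≠ 3) (hx2 : x ≠ 2)
    (h1 : 1 ≤ g x) (h2 : g x ≤ nw.len) :
    (fPrev e (σ 0) p x : WMSO K Δ).sem nw g G = ind (σ (g x - 1) = p) := by
  classical
  have hb : (exF 2 (and (fPred 2 x) (fSt e p 2)) : WMSO K Δ).sem nw g G =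
      ind (1 < g x ∧ σ (g x - 1) = p) := by
    rw [sem_exF]
    trans ∑ i ∈ Icc 1 nw.len, ind (i + 1 = g x ∧ σ i = p)
    · refine sum_congr rfl fun i hi => ?_
      rw [mem_Icc] at hi
      have e1 : Function.update g 2 i x = g x := Function.update_of_ne hx2 _ _
      have e2 : Function.update g 2 i 2 = i := Function.update_self _ _ _
      rw [sem_and, sem_fPred _ _ _ _ _ hx (by omega) (by omega) (by omega) (by omega) (by omega),
        sem_fSt, ind_mul, e1, e2]
      exact ind_congr (by rw [hσ i hi.1 hi.2 p])
    · rw [sum_ind]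
      · refine ind_congr ?_
        constructor
        · rintro ⟨i, hi, h, h'⟩
          rw [mem_Icc] at hi
          rw [← h]
          exact ⟨by omega, h'⟩
        · rintro ⟨h, h'⟩
          exact ⟨g x - 1, by rw [mem_Icc]; omega, by omega, h'⟩
      · intro i _ j _ h h'
        omega
  rw [fPrev, sem_or, hb]
  have ha : (if σ 0 = p then fFirst x else const 0 : WMSO K Δ).sem nw g G =
      ind (g x = 1 ∧ σ (g x - 1) = p) := by
    by_cases h : σ 0 = p
    · rw [if_pos h, sem_fFirst _ _ _ _ hx h1]
      refine ind_congr ⟨fun h' => ⟨h', ?_⟩, fun h' => h'.1⟩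
      rw [h']; exact h
    · rw [if_neg h, sem_const]
      have : ¬ (g x = 1 ∧ σ (g x - 1) = p) := by
        rintro ⟨h', h''⟩
        rw [h'] at h''
        exact h h''
      simp [this]
  have ha' : ∀ (inst : Decidable (σ 0 = p)),
      (@ite _ (σ 0 = p) inst (fFirst x) (const 0) : WMSO K Δ).sem nw g G =
      ind (g x = 1 ∧ σ (g x - 1) = p) := by
    intro inst
    rw [← ha]
    congr
  rw [ha', ind_add _ _ (by omega)]
  refine ind_congr ?_
  constructor
  · rintro (h | h) <;> exact h.2
  · intro h
    by_cases h' : g x = 1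
    · exact Or.inl ⟨h', h⟩
    · exact Or.inr ⟨by omega, h⟩

theorem sem_fRet {nw : NestedWord Δ} {G : ℕ → Finset ℕ} {e : Q → ℕ} {σ : ℕ → Q}
    (hσ : Codes nw G e σ) (g : ℕ → ℕ) (p : Q) :
    (fRet e (σ 0) p : WMSO K Δ).sem nw g G = ind (∃ i, nw.rel i (g 0) ∧ σ (i - 1) = p) := by
  rw [fRet, sem_exF]
  trans ∑ i ∈ Icc 1 nw.len, ind (nw.rel i (g 0) ∧ σ (i - 1) = p)
  · refine sum_congr rfl fun i hi => ?_
    rw [mem_Icc] at hi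
    have e2 : Function.update g 1 i 1 = i := Function.update_self _ _ _
    have e1 : Function.update g 1 i 0 = g 0 := Function.update_of_ne (by decide) _ _
    rw [sem_and, sem_nuv, sem_fPrev hσ _ _ _ (by decide) (by decide) (by omega) (by omega),
      ind_mul, e1, e2]
  · rw [sum_ind]
    · refine ind_congr ⟨fun ⟨i, _, h⟩ => ⟨i, h⟩, fun ⟨i, h⟩ => ⟨i, ?_, h⟩⟩
      have := nw.isNest.1 _ _ h.1
      have hl : nw.len = nw.word.length := rfl
      rw [mem_Icc]; omega
    · intro i _ j _ h h'
      exact nw.isNest.2.2.1 _ _ _ h.1 h'.1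

theorem sem_fCall (nw : NestedWord Δ) (G : ℕ → Finset ℕ) (g : ℕ → ℕ) :
    (fCall : WMSO K Δ).sem nw g G = ind (nw.IsCall (g 0)) := by
  rw [fCall, sem_exF]
  trans ∑ i ∈ Icc 1 nw.len, ind (nw.rel (g 0) i)
  · refine sum_congr rfl fun i hi => ?_
    have e2 : Function.update g 1 i 1 = i := Function.update_self _ _ _
    have e1 : Function.update g 1 i 0 = g 0 := Function.update_of_ne (by decide) _ _
    rw [sem_nuv, e1, e2]
  · rw [sum_ind]
    · refine ind_congr ⟨fun ⟨i, _, h⟩ => ⟨i, h⟩, fun ⟨i, h⟩ => ⟨i, ?_, h⟩⟩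
      have := nw.isNest.1 _ _ h
      have hl : nw.len = nw.word.length := rfl
      rw [mem_Icc]; omega
    · intro i _ j _ h h'
      exact nw.isNest.2.1 _ _ _ h h'

theorem sem_fInt (nw : NestedWord Δ) (G : ℕ → Finset ℕ) (g : ℕ → ℕ) :
    (fInt : WMSO K Δ).sem nw g G = ind (¬ nw.IsCall (g 0) ∧ ¬ nw.IsReturn (g 0)) := by
  have e2 : ∀ i, Function.update g 1 i 1 = i := fun i => Function.update_self _ _ _
  have e1 : ∀ i, Function.update g 1 i 0 = g 0 := fun i => Function.update_of_ne (by decide) _ _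
  have hl : nw.len = nw.word.length := rfl
  simp only [fInt, sem_and, sem_alF, sem_nnu, e1, e2, prod_ind, ind_mul]
  refine ind_congr ⟨fun ⟨h, h'⟩ => ⟨?_, ?_⟩, fun ⟨h, h'⟩ => ⟨?_, ?_⟩⟩
  · rintro ⟨i, hi⟩
    have := nw.isNest.1 _ _ hi
    exact h i (by rw [mem_Icc]; omega) hi
  · rintro ⟨i, hi⟩
    have := nw.isNest.1 _ _ hi
    exact h' i (by rw [mem_Icc]; omega) hi
  · exact fun i _ hi => h ⟨i, hi⟩
  · exact fun i _ hi => h' ⟨i, hi⟩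

theorem sum_ind_mul {α : Type} [Fintype α] (a : α) (f : α → K) :
    ∑ b, ind (a = b) * f b = f a := by
  classical
  rw [sum_eq_single_of_mem a (mem_univ _)]
  · simp
  · intro b _ hb
    have : ¬ a = b := fun h => hb h.symm
    simp [this]

theorem sem_fW {nw : NestedWord Δ} (A : WNWA K Δ) {G : ℕ → Finset ℕ} {e : A.Q → ℕ} {σ : ℕ → A.Q}
    (hσ : Codes nw G e σ) (g : ℕ → ℕ) (h1 : 1 ≤ g 0) (h2 : g 0 ≤ nw.len) :
    (fW A e (σ 0)).sem nw g G = A.posWeight nw σ (g 0) := by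
  classical
  set j := g 0 with hj
  rw [fW, sem_bigOr]
  trans ∑ t : A.Q × Δ × A.Q, ind ((σ (j - 1), nw.letter j, σ j) = t) *
      (ind (nw.IsCall j) * A.δcall t.1 t.2.1 t.2.2 +
      (ind (¬ nw.IsCall j ∧ ¬ nw.IsReturn j) * A.δint t.1 t.2.1 t.2.2 +
        ∑ p, ind (∃ i, nw.rel i j ∧ σ (i - 1) = p) * A.δret t.1 p t.2.1 t.2.2))
  · refine sum_congr rfl fun t _ => ?_
    simp only [sem_and, sem_or, sem_const, sem_bigOr, sem_fCall, sem_fInt, sem_fRet hσ, sem_lab,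
      sem_fSt]
    rw [sem_fPrev hσ _ _ _ (by decide) (by decide) h1 h2, ← hj, propext (hσ j h1 h2 t.2.2),
      ← mul_assoc, ← mul_assoc, ind_mul, ind_mul]
    congr 1
    refine ind_congr ?_
    obtain ⟨p, a, q⟩ := t
    simp only [Prod.mk.injEq]
    tauto
  · rw [sum_ind_mul]
    dsimp only
    unfold WNWA.posWeight
    by_cases hc : nw.IsCall j
    · have hr : ∀ p, ¬ ∃ i, nw.rel i j ∧ σ (i - 1) = p := by
        rintro p ⟨i, hi, -⟩
        exact not_call_of_rel hi hc
      simp [hc, hr]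
    · by_cases hr : nw.IsReturn j
      · have hp : ∀ p, (∃ i, nw.rel i j ∧ σ (i - 1) = p) ↔ σ (hr.choose - 1) = p := by
          intro p
          constructor
          · rintro ⟨i, hi, h⟩
            rw [← nw.isNest.2.2.1 _ _ _ hi hr.choose_spec]; exact h
          · intro h
            exact ⟨_, hr.choose_spec, h⟩
        simp only [hp, sum_ind_mul]
        simp [hc, hr]
      · have hr' : ∀ p, ¬ ∃ i, nw.rel i j ∧ σ (i - 1) = p := by
          rintro p ⟨i, hi, -⟩
          exact hr ⟨i, hi⟩
        simp [hc, hr, hr']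

theorem sem_fW_zero {nw : NestedWord Δ} (A : WNWA K Δ) {G : ℕ → Finset ℕ} {e : A.Q → ℕ} (q0 : A.Q)
    (g : ℕ → ℕ) (h : ∀ q, ¬ ∀ q', g 0 ∈ G (e q') ↔ q' = q) :
    (fW A e q0).sem nw g G = 0 := by
  rw [fW, sem_bigOr]
  refine sum_eq_zero fun t _ => ?_
  simp only [sem_and, sem_fSt]
  rw [propext (iff_false_intro (h t.2.2))]
  simp

theorem sem_fFinal {nw : NestedWord Δ} {G : ℕ → Finset ℕ} {e : Q → ℕ} {σ : ℕ → Q}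
    (hσ : Codes nw G e σ) (g : ℕ → ℕ) (q : Q) :
    (fFinal e q : WMSO K Δ).sem nw g G = ind (σ nw.len = q) := by
  have hn : 0 < nw.len := List.length_pos_of_ne_nil nw.ne
  rw [fFinal, sem_exF]
  trans ∑ i ∈ Icc 1 nw.len, ind (nw.len = i ∧ σ i = q)
  · refine sum_congr rfl fun i hi => ?_
    rw [mem_Icc] at hi
    have e0 : Function.update g 0 i 0 = i := Function.update_self _ _ _
    have e1 : ∀ k, Function.update (Function.update g 0 i) 1 k 1 = k :=
      fun k => Function.update_self _ _ _
    have e2 : ∀ k, Function.update (Function.update g 0 i) 1 k 0 = i :=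
      fun k => by rw [Function.update_of_ne (by decide), e0]
    simp only [sem_and, sem_fSt, sem_alF, sem_lev, e0, e1, e2, prod_ind, ind_mul]
    rw [propext (hσ i hi.1 hi.2 q)]
    refine ind_congr (and_congr_left' ?_)
    constructor
    · intro h
      have := h nw.len (by rw [mem_Icc]; omega)
      omega
    · intro h k hk
      rw [mem_Icc] at hk
      omega
  · rw [sum_ind]
    · refine ind_congr ⟨?_, fun h => ⟨nw.len, by rw [mem_Icc]; omega, rfl, h⟩⟩
      rintro ⟨i, -, rfl, h⟩
      exact h
    · intro i _ j _ h h'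
      omega

theorem definable_of_regular (S : NestedWord Δ → K) (hS : NWRegular S) :
    NWDefinable (fun _ => True) S := by
  classical
  obtain ⟨A, hA⟩ := hS
  let m := Fintype.card A.Q
  let ε : A.Q ≃ Fin m := Fintype.equivFin A.Q
  let e : A.Q → ℕ := fun q => (ε q : ℕ)
  refine ⟨fAuto A m e, trivial, fAuto_sentence A e (fun q => (ε q).2), fun nw g G => ?_⟩
  rw [← hA nw, fAuto, sem_bigOr]
  simp only [sem_and, sem_const, sem_exSs, sem_alF, sem_bigOr]
  simp_rw [mul_sum (s := Fintype.piFinset _)]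
  rw [← sum_product', WNWA.behavior]
  have hove : ∀ (T : Fin m → Finset ℕ) q, ovr T G (e q) = T (ε q) := by
    intro T q
    simp [ovr, e]
  let F : (Fin (nw.len + 1) → A.Q) → A.Q × (Fin m → Finset ℕ) := fun r =>
    (r 0, fun k => (Icc 1 nw.len).filter fun x => ε (clampFun r x) = k)
  symm
  refine sum_of_injOn F ?_ ?_ ?_ ?_
  · intro r _ r' _ h
    simp only [F, Prod.mk.injEq] at h
    funext i
    by_cases hi : i = 0
    · rw [hi, h.1]
    · have h3 := congrFun h.2 (ε (r i))
      have hc : ∀ r : Fin (nw.len + 1) → A.Q, clampFun r i = r i := by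
        intro r
        have : min (i : ℕ) nw.len = i := by omega
        simp [clampFun, this]
      have h4 : (i : ℕ) ∈ (Icc 1 nw.len).filter fun x => ε (clampFun r x) = ε (r i) := by
        rw [mem_filter, mem_Icc, hc]
        refine ⟨⟨?_, by omega⟩, rfl⟩
        have : (i : ℕ) ≠ 0 := fun h => hi (Fin.ext h)
        omega
      rw [h3, mem_filter, hc] at h4
      exact (ε.injective h4.2).symm
  · intro r _
    simp only [F, coe_product, Set.mem_prod, mem_coe, mem_univ, Fintype.mem_piFinset, true_and,
      mem_powerset]
    exact fun k => filter_subset _ _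
  · rintro ⟨q0, T⟩ hT hne
    simp only [mem_product, mem_univ, true_and, Fintype.mem_piFinset, mem_powerset] at hT
    have : ∃ x ∈ Icc 1 nw.len, ∀ q, ¬ ∀ q', x ∈ T (ε q') ↔ q' = q := by
      by_contra hcon
      push Not at hcon
      haveI : Nonempty A.Q := ⟨q0⟩
      choose! s hs using hcon
      refine hne ⟨fun i => if i = 0 then q0 else s i, by simp, ?_⟩
      simp only [F, Prod.mk.injEq]
      refine ⟨by simp, ?_⟩
      funext k
      ext x
      rw [mem_filter]
      have key : x ∈ Icc 1 nw.len → clampFun (n := nw.len)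
          (fun i => if i = 0 then q0 else s i) x = s x := by
        intro hx
        rw [mem_Icc] at hx
        have h1 : min x nw.len = x := by omega
        have h2 : x ≠ 0 := by omega
        simp [clampFun, h1, h2, Fin.ext_iff]
      constructor
      · rintro ⟨hx, h⟩
        rw [key hx] at h
        rw [← h]
        exact (hs x hx _).2 rfl
      · intro hx
        have hx' := hT k hx
        refine ⟨hx', ?_⟩
        rw [key hx']
        have := (hs x hx' (ε.symm k)).1 (by simpa using hx)
        rw [← this]; simp
    obtain ⟨x, hx, hq⟩ := this
    have : ∏ i ∈ Icc 1 nw.len, (fW A e q0).sem nw (Function.update g 0 i) (ovr T G) = 0 := by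
      refine prod_eq_zero hx (sem_fW_zero A q0 _ fun q => ?_)
      simpa [hove] using hq q
    simp only [this]
    simp
  · intro r _
    have hσ : Codes nw (ovr (F r).2 G) e (clampFun r) := by
      intro x hx hx' q
      have : ∀ q', x ∈ ovr (F r).2 G (e q') ↔ clampFun r x = q' := by
        intro q'
        simp [hove, F, hx, hx']
      simp only [this]
      constructor
      · intro h; exact (h q).2 rfl
      · intro h q'; rw [h]; exact eq_comm
    have h0 : (F r).1 = clampFun r 0 := by simp [F, clampFun]
    have hlast : clampFun r nw.len = r (Fin.last _) := by simp [clampFun, Fin.last]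
    rw [h0]
    simp only [sem_fFinal hσ, sum_ind_mul, hlast]
    rw [mul_assoc]
    have h00 : r 0 = clampFun r 0 := by simp [clampFun]
    rw [h00]
    congr 2
    rw [WNWA.runWeight]
    refine prod_congr rfl fun i hi => ?_
    rw [mem_Icc] at hi
    have e0 : Function.update g 0 i 0 = i := Function.update_self _ _ _
    rw [sem_fW A hσ _ (by rw [e0]; exact hi.1) (by rw [e0]; exact hi.2), e0]

end AutoSem

end NWProof

/-- **Theorem (Mathissen).** Over a locally finite commutative semiring, a nested
word series is regular iff it is `MSO(K)`-definable. -/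
theorem regular_iff_MSO_definable_of_locallyFinite
    (K Δ : Type) [CommSemiring K] [Fintype Δ] (h01 : (0 : K) ≠ 1)
    (hK : LocallyFiniteSemiring K) (S : NestedWord Δ → K) :
    NWRegular S ↔ NWDefinable (fun _ => True) S := by
  exact ⟨fun h => NWProof.definable_of_regular S h, fun h => NWProof.regular_of_definable hK S h⟩
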